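/- Let n ≤ m and n_1,…,n_m ≤ n be positive integers. For each 1 ≤ i ≤ m let C_i be an n_i × n real matrix and Q_i a symmetric n_i × n_i matrix with C_i C_iᵀ ≤ I_{n_i}, Q_i ≥ I_{n_i}, (I_{n_i} − C_i C_iᵀ)(Q_i − I_{n_i}) = 0, and let p_i > 0 satisfy ∑_{i=1}^m p_i C_iᵀ C_i = I_n. Then for all nonnegative functions f_i on ℝ^{n_i}, integrable with respect to γ_{n_i} and more log-convex than g_{(Q_i − I_{n_i})/(2π)}, one has ∫_{ℝⁿ} ∏_{i=1}^m f_i(C_i x)^{p_i} dγ_n(x) ≤ ∏_{i=1}^m (∫_{ℝ^{n_i}} f_i dγ_{n_i})^{p_i}. -/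

import Mathlib

open MeasureTheory Matrix
open scoped ENNReal

noncomputable section

/-- The centered Gaussian function attached to a matrix `Q` : `g_Q(x) = exp(-π⟨Qx,x⟩)`. -/
def gaussFn {k : ℕ} (Q : Matrix (Fin k) (Fin k) ℝ) (x : Fin k → ℝ) : ℝ :=
  Real.exp (-Real.pi * (Q.mulVec x ⬝ᵥ x))

/-- A nonnegative log-convex function. -/
def LogConvexFun {k : ℕ} (h : (Fin k → ℝ) → ℝ) : Prop :=
  (∀ x, 0 ≤ h x) ∧
    ∀ x y : Fin k → ℝ, ∀ a b : ℝ, 0 ≤ a → 0 ≤ b → a + b = 1 →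
      h (a • x + b • y) ≤ h x ^ a * h y ^ b

/-- `f` is more log-convex than `g_Q`, i.e. `f = g_Q · h` with `h` log-convex. -/
def MoreLogConvex {k : ℕ} (f : (Fin k → ℝ) → ℝ) (Q : Matrix (Fin k) (Fin k) ℝ) : Prop :=
  ∃ h : (Fin k → ℝ) → ℝ, LogConvexFun h ∧ f = fun x => gaussFn Q x * h x

/-- The standard Gaussian probability measure on `ℝ^k`. -/
def stdGaussian (k : ℕ) : Measure (Fin k → ℝ) :=
  volume.withDensity fun x =>
    ENNReal.ofReal ((2 * Real.pi) ^ (-(k : ℝ) / 2) * Real.exp (-(∑ i, x i ^ 2) / 2))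

open scoped RealInnerProductSpace

theorem Real.log_one_add_le_cubic {e : ℝ} (he : -1 < e) :
    Real.log (1 + e) ≤ e - e ^ 2 / 2 + |e| ^ 3 / 3 := by
  suffices h : Real.log (1 + e) ≤ e - e ^ 2 / 2 + e ^ 3 / 3 by
    have : e ^ 3 ≤ |e| ^ 3 := (le_abs_self _).trans_eq (abs_pow e 3)
    linarith
  let g : ℝ → ℝ := fun t => t - t ^ 2 / 2 + t ^ 3 / 3 - Real.log (1 + t)
  have hg : ∀ t ∈ Set.Ioi (-1 : ℝ), HasDerivAt g (t ^ 3 / (1 + t)) t := by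
    intro t ht
    have ht' : (1 + t) ≠ 0 := by have := Set.mem_Ioi.1 ht; linarith
    have h1 : HasDerivAt (fun t : ℝ => 1 + t) 1 t := (hasDerivAt_id t).const_add 1
    have h := (((hasDerivAt_id t).sub ((hasDerivAt_pow 2 t).div_const 2)).add
      ((hasDerivAt_pow 3 t).div_const 3)).sub (h1.log ht')
    refine HasDerivAt.congr_deriv (f := g) h ?_
    norm_num
    field_simp
    ring
  have hg0 : g 0 = 0 := by simp [g]
  suffices 0 ≤ g e by simp only [g] at this; linarith
  rcases le_total 0 e with h | h
  · have hmono : MonotoneOn g (Set.Ici 0) := by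
      refine monotoneOn_of_hasDerivWithinAt_nonneg (f' := fun t => t ^ 3 / (1 + t))
        (convex_Ici 0) ?_ ?_ ?_
      · intro t ht
        exact (hg t (by have := Set.mem_Ici.1 ht; simp; linarith)).continuousAt.continuousWithinAt
      · intro t ht
        rw [interior_Ici] at ht
        exact (hg t (by have := Set.mem_Ioi.1 ht; simp; linarith)).hasDerivWithinAt
      · intro t ht
        rw [interior_Ici] at ht
        have := Set.mem_Ioi.1 ht
        positivity
    simpa [hg0] using hmono (Set.mem_Ici.2 le_rfl) (Set.mem_Ici.2 h) h
  · have hanti : AntitoneOn g (Set.Icc e 0) := by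
      refine antitoneOn_of_hasDerivWithinAt_nonpos (f' := fun t => t ^ 3 / (1 + t))
        (convex_Icc e 0) ?_ ?_ ?_
      · intro t ht
        exact (hg t (by simp; linarith [ht.1])).continuousAt.continuousWithinAt
      · intro t ht
        rw [interior_Icc] at ht
        exact (hg t (by simp; linarith [ht.1])).hasDerivWithinAt
      · intro t ht
        rw [interior_Icc] at ht
        apply div_nonpos_of_nonpos_of_nonneg
        · nlinarith [ht.2, sq_nonneg t]
        · linarith [ht.1]
    simpa [hg0] using hanti (Set.left_mem_Icc.2 h) (Set.right_mem_Icc.2 h) h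

theorem Real.exp_le_quadratic_add {x y D : ℝ} (hxy : x ≤ y) (hy : |y| ≤ D) :
    Real.exp x ≤ 1 + y + y ^ 2 / 2 + |y| ^ 3 * Real.exp D := by
  have h2 : ‖Complex.exp y - ∑ m ∈ Finset.range 3, (y : ℂ) ^ m / m.factorial‖ ≤
      ‖(y : ℂ)‖ ^ 3 * Real.exp ‖(y : ℂ)‖ := Complex.norm_exp_sub_sum_le_norm_mul_exp y 3
  have h3 : |Real.exp y - ∑ m ∈ Finset.range 3, y ^ m / m.factorial| ≤
      |y| ^ 3 * Real.exp |y| := by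
    rw [Complex.norm_real, Real.norm_eq_abs] at h2
    rw [← Real.norm_eq_abs, ← Complex.norm_real]
    push_cast
    exact h2
  have h4 : |y| ^ 3 * Real.exp |y| ≤ |y| ^ 3 * Real.exp D := by gcongr
  have h5 := (abs_le.1 h3).2
  simp [Finset.sum_range_succ, Nat.factorial] at h5
  have := Real.exp_le_exp.2 hxy
  linarith

set_option maxHeartbeats 1000000 in
/-- A second order upper bound for `∏ i, (1 + e i) ^ c i`. -/
theorem prod_one_add_rpow_le {ι : Type*} [Fintype ι] (c : ι → ℝ) (hc : ∀ i, 0 ≤ c i)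
    {L : ℝ} (hL : 0 ≤ L) :
    ∃ C, 0 ≤ C ∧ ∀ (e : ι → ℝ) (t : ℝ), 0 ≤ t → (∀ i, -1 < e i) → (∀ i, |e i| ≤ L) →
      (∀ i, |e i| ≤ L * t) →
      ∏ i, (1 + e i) ^ c i ≤
        1 + ∑ i, c i * e i + ((∑ i, c i * e i) ^ 2 - ∑ i, c i * e i ^ 2) / 2 + C * t ^ 3 := by
  set s := ∑ i, c i with hs
  have hs0 : 0 ≤ s := Finset.sum_nonneg fun i _ => hc i
  set D := s * (L + L ^ 2 + L ^ 3) with hD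
  have hD0 : 0 ≤ D := by positivity
  refine ⟨D + D * D + D ^ 3 * Real.exp D, by positivity, fun e t ht h1 hL1 hLt => ?_⟩
  have key : ∀ g : ι → ℝ, ∀ b : ℝ, (∀ i, |g i| ≤ b) → |∑ i, c i * g i| ≤ s * b := by
    intro g b hg
    refine (Finset.abs_sum_le_sum_abs _ _).trans ?_
    rw [hs, Finset.sum_mul]
    refine Finset.sum_le_sum fun i _ => ?_
    rw [abs_mul, abs_of_nonneg (hc i)]
    exact mul_le_mul_of_nonneg_left (hg i) (hc i)
  set A1 := ∑ i, c i * e i with hA1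
  set A2 := ∑ i, c i * e i ^ 2 with hA2
  set A3 := ∑ i, c i * |e i| ^ 3 with hA3
  have hA20 : 0 ≤ A2 := Finset.sum_nonneg fun i _ => mul_nonneg (hc i) (sq_nonneg _)
  have hA30 : 0 ≤ A3 := Finset.sum_nonneg fun i _ => mul_nonneg (hc i) (by positivity)
  have b1 : |A1| ≤ s * L := key _ _ hL1
  have b1t : |A1| ≤ s * L * t := by rw [mul_assoc]; exact key _ _ hLt
  have b2 : A2 ≤ s * L ^ 2 := by
    refine (le_abs_self _).trans (key _ _ fun i => ?_)
    rw [abs_pow]; exact pow_le_pow_left₀ (abs_nonneg _) (hL1 i) 2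
  have b2t : A2 ≤ s * L ^ 2 * t := by
    refine (le_abs_self _).trans ((key _ (L ^ 2 * t) fun i => ?_).trans_eq (by ring))
    rw [abs_pow]; nlinarith [abs_nonneg (e i), hL1 i, hLt i]
  have b2tt : A2 ≤ s * L ^ 2 * t ^ 2 := by
    refine (le_abs_self _).trans ((key _ ((L * t) ^ 2) fun i => ?_).trans_eq (by ring))
    rw [abs_pow]; exact pow_le_pow_left₀ (abs_nonneg _) (hLt i) 2
  have b3 : A3 ≤ s * L ^ 3 := by
    refine (le_abs_self _).trans (key _ _ fun i => ?_)
    rw [abs_pow, abs_abs]; exact pow_le_pow_left₀ (abs_nonneg _) (hL1 i) 3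
  have q3 : ∀ i, |(|e i| ^ 3)| ≤ L * (|e i|) ^ 2 := fun i => by
    rw [abs_pow, abs_abs, pow_succ' _ 2]
    exact mul_le_mul_of_nonneg_right (hL1 i) (sq_nonneg _)
  have b3tt : A3 ≤ s * L ^ 3 * t ^ 2 := by
    refine (le_abs_self _).trans ((key _ (L * (L * t) ^ 2) fun i => ?_).trans_eq (by ring))
    exact (q3 i).trans (mul_le_mul_of_nonneg_left
      (pow_le_pow_left₀ (abs_nonneg _) (hLt i) 2) hL)
  have b3t : A3 ≤ s * L ^ 3 * t := by
    refine (le_abs_self _).trans ((key _ (L * (L * (L * t))) fun i => ?_).trans_eq (by ring))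
    refine (q3 i).trans (mul_le_mul_of_nonneg_left ?_ hL)
    nlinarith [abs_nonneg (e i), hL1 i, hLt i]
  have b3ttt : A3 ≤ s * L ^ 3 * t ^ 3 := by
    refine (le_abs_self _).trans ((key _ ((L * t) ^ 3) fun i => ?_).trans_eq (by ring))
    rw [abs_pow, abs_abs]; exact pow_le_pow_left₀ (abs_nonneg _) (hLt i) 3
  set T := A1 - A2 / 2 + A3 / 3 with hT
  have hprod : ∏ i, (1 + e i) ^ c i = Real.exp (∑ i, c i * Real.log (1 + e i)) := by
    rw [Real.exp_sum]
    refine Finset.prod_congr rfl fun i _ => ?_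
    rw [Real.rpow_def_of_pos (by linarith [h1 i]), mul_comm]
  have hST : ∑ i, c i * Real.log (1 + e i) ≤ T := by
    rw [hT, hA1, hA2, hA3, Finset.sum_div, Finset.sum_div, ← Finset.sum_sub_distrib,
      ← Finset.sum_add_distrib]
    refine Finset.sum_le_sum fun i _ => ?_
    have := mul_le_mul_of_nonneg_left (Real.log_one_add_le_cubic (h1 i)) (hc i)
    linarith
  obtain ⟨b1l, b1u⟩ := abs_le.1 b1
  obtain ⟨b1tl, b1tu⟩ := abs_le.1 b1t
  have n1 : 0 ≤ s * L := by positivity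
  have n2 : 0 ≤ s * L ^ 2 := by positivity
  have n3 : 0 ≤ s * L ^ 3 := by positivity
  have m1 : 0 ≤ s * L * t := by positivity
  have m2 : 0 ≤ s * L ^ 2 * t := by positivity
  have m3 : 0 ≤ s * L ^ 3 * t := by positivity
  have l1 : 0 ≤ s * L * t ^ 2 := by positivity
  have l2 : 0 ≤ s * L ^ 2 * t ^ 2 := by positivity
  have l3 : 0 ≤ s * L ^ 3 * t ^ 2 := by positivity
  have k1 : 0 ≤ s * L * t ^ 3 := by positivity
  have k2 : 0 ≤ s * L ^ 2 * t ^ 3 := by positivity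
  have hTD : |T| ≤ D := by rw [abs_le]; constructor <;> rw [hT, hD] <;> linarith
  have hTDt : |T| ≤ D * t := by rw [abs_le]; constructor <;> rw [hT, hD] <;> linarith
  have hA1Dt : |A1| ≤ D * t := by rw [abs_le]; constructor <;> rw [hD] <;> linarith
  have hTA : |T - A1| ≤ D * t ^ 2 := by rw [abs_le]; constructor <;> rw [hT, hD] <;> linarith
  have hsq : T ^ 2 ≤ A1 ^ 2 + 2 * (D * D) * t ^ 3 := by
    have h1 : |T + A1| ≤ 2 * (D * t) := (abs_add_le _ _).trans (by linarith)
    have h2 : (T - A1) * (T + A1) ≤ (D * t ^ 2) * (2 * (D * t)) := by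
      refine (le_abs_self _).trans ?_
      rw [abs_mul]
      exact mul_le_mul hTA h1 (abs_nonneg _) (by positivity)
    linarith [show (T - A1) * (T + A1) = T ^ 2 - A1 ^ 2 by ring,
      show D * t ^ 2 * (2 * (D * t)) = 2 * (D * D) * t ^ 3 by ring]
  have hcube : |T| ^ 3 * Real.exp D ≤ D ^ 3 * t ^ 3 * Real.exp D := by
    rw [← mul_pow]
    gcongr
  have hA3D : A3 / 3 ≤ D * t ^ 3 := by rw [hD]; linarith
  rw [hprod]
  refine (Real.exp_le_quadratic_add hST hTD).trans ?_
  have : (D + D * D + D ^ 3 * Real.exp D) * t ^ 3 =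
      D * t ^ 3 + D * D * t ^ 3 + D ^ 3 * t ^ 3 * Real.exp D := by ring
  linarith

theorem le_prod_one_add_rpow {ι : Type*} [Fintype ι] (c : ι → ℝ) (hc : ∀ i, 0 ≤ c i)
    {b : ℝ} (hb : 0 < b) (d : ι → ℝ) (hd : ∀ i, b ≤ 1 + d i) :
    1 + ∑ i, c i * d i - b⁻¹ * ∑ i, c i * d i ^ 2 ≤ ∏ i, (1 + d i) ^ c i := by
  have hprod : ∏ i, (1 + d i) ^ c i = Real.exp (∑ i, c i * Real.log (1 + d i)) := by
    rw [Real.exp_sum]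
    refine Finset.prod_congr rfl fun i _ => ?_
    rw [Real.rpow_def_of_pos (hb.trans_le (hd i)), mul_comm]
  rw [hprod]
  refine le_trans ?_ (Real.add_one_le_exp _)
  have : ∑ i, c i * d i - b⁻¹ * ∑ i, c i * d i ^ 2 ≤ ∑ i, c i * Real.log (1 + d i) := by
    rw [Finset.mul_sum, ← Finset.sum_sub_distrib]
    refine Finset.sum_le_sum fun i _ => ?_
    have hp := hb.trans_le (hd i)
    have h1 := Real.one_sub_inv_le_log_of_pos hp
    have h2 : d i - b⁻¹ * d i ^ 2 ≤ 1 - (1 + d i)⁻¹ := by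
      have : 1 - (1 + d i)⁻¹ = d i - (1 + d i)⁻¹ * d i ^ 2 := by field_simp; ring
      rw [this]
      have : (1 + d i)⁻¹ ≤ b⁻¹ := inv_anti₀ hb (hd i)
      nlinarith [sq_nonneg (d i)]
    nlinarith [hc i]
  linarith

theorem prod_one_add_rpow_le_of_eq_add {ι : Type*} [Fintype ι] (c : ι → ℝ) (hc : ∀ i, 0 ≤ c i)
    {L : ℝ} (hL : 0 ≤ L) :
    ∃ C, 0 ≤ C ∧ ∀ (e l : ι → ℝ) (t : ℝ), 0 ≤ t → (∀ i, -1 < e i) → (∀ i, |e i| ≤ L) →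
      (∀ i, |e i| ≤ L * t) → (∀ i, |l i| ≤ L * t) → (∀ i, |e i - l i| ≤ L * t ^ 2) →
      ∏ i, (1 + e i) ^ c i ≤
        1 + ∑ i, c i * e i + ((∑ i, c i * l i) ^ 2 - ∑ i, c i * l i ^ 2) / 2 + C * t ^ 3 := by
  obtain ⟨C, hC0, hC⟩ := prod_one_add_rpow_le c hc hL
  set s := ∑ i, c i with hs
  have hs0 : 0 ≤ s := Finset.sum_nonneg fun i _ => hc i
  refine ⟨C + s ^ 2 * L ^ 2 + s * L ^ 2, by positivity, fun e l t ht h1 hL1 hLt hlt hr => ?_⟩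
  have key : ∀ g : ι → ℝ, ∀ b : ℝ, (∀ i, |g i| ≤ b) → |∑ i, c i * g i| ≤ s * b := by
    intro g b hg
    refine (Finset.abs_sum_le_sum_abs _ _).trans ?_
    rw [hs, Finset.sum_mul]
    refine Finset.sum_le_sum fun i _ => ?_
    rw [abs_mul, abs_of_nonneg (hc i)]
    exact mul_le_mul_of_nonneg_left (hg i) (hc i)
  have hel : ∀ i, |e i + l i| ≤ 2 * L * t := fun i =>
    (abs_add_le _ _).trans (by linarith [hLt i, hlt i])
  have q1 : (∑ i, c i * e i) ^ 2 - (∑ i, c i * l i) ^ 2 ≤ s * (L * t ^ 2) * (s * (2 * L * t)) := by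
    have : (∑ i, c i * e i) ^ 2 - (∑ i, c i * l i) ^ 2 =
        (∑ i, c i * (e i - l i)) * ∑ i, c i * (e i + l i) := by
      simp only [mul_sub, mul_add, Finset.sum_sub_distrib, Finset.sum_add_distrib]
      ring
    rw [this]
    refine (le_abs_self _).trans ?_
    rw [abs_mul]
    exact mul_le_mul (key _ _ hr) (key _ _ hel) (abs_nonneg _) (by positivity)
  have q2 : ∑ i, c i * l i ^ 2 - ∑ i, c i * e i ^ 2 ≤ s * ((L * t ^ 2) * (2 * L * t)) := by
    rw [← Finset.sum_sub_distrib]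
    have : ∀ i, c i * l i ^ 2 - c i * e i ^ 2 = c i * (-((e i - l i) * (e i + l i))) :=
      fun i => by ring
    simp only [this]
    refine (le_abs_self _).trans (key _ _ fun i => ?_)
    rw [abs_neg, abs_mul]
    exact mul_le_mul (hr i) (hel i) (abs_nonneg _) (by positivity)
  have := hC e t ht h1 hL1 hLt
  linarith [show s * (L * t ^ 2) * (s * (2 * L * t)) = 2 * (s ^ 2 * L ^ 2 * t ^ 3) by ring,
    show s * ((L * t ^ 2) * (2 * L * t)) = 2 * (s * L ^ 2 * t ^ 3) by ring,
    show (C + s ^ 2 * L ^ 2 + s * L ^ 2) * t ^ 3 =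
      C * t ^ 3 + s ^ 2 * L ^ 2 * t ^ 3 + s * L ^ 2 * t ^ 3 by ring]

section RegularPos

variable {E : Type*} [NormedAddCommGroup E] [InnerProductSpace ℝ E]

/-- A positive function `u` bounded above and away from zero, with a bounded gradient `G` taking
values in `V` and a quadratic bound on the first order Taylor remainder. -/
structure RegularPos (V : Submodule ℝ E) (a M K : ℝ) (u : E → ℝ) (G : E → E) : Prop where
  continuous_fun : Continuous u
  continuous_grad : Continuous G
  lower : ∀ x, a ≤ u x
  upper : ∀ x, u x ≤ M
  grad_le : ∀ x, ‖G x‖ ≤ K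
  grad_mem : ∀ x, G x ∈ V
  remainder : ∀ x v, |u (x + v) - u x - ⟪G x, v⟫| ≤ K * ‖v‖ ^ 2

theorem RegularPos.norm_le {V : Submodule ℝ E} {a M K : ℝ} (ha : 0 ≤ a) {u : E → ℝ} {G : E → E}
    (h : RegularPos V a M K u G) (x : E) : ‖u x‖ ≤ M := by
  rw [Real.norm_of_nonneg (ha.trans (h.lower x))]
  exact h.upper x

theorem RegularPos.mono {V : Submodule ℝ E} {a a' M M' K K' : ℝ} {u : E → ℝ} {G : E → E}
    (h : RegularPos V a M K u G) (ha : a' ≤ a) (hM : M ≤ M') (hK : K ≤ K') :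
    RegularPos V a' M' K' u G where
  continuous_fun := h.continuous_fun
  continuous_grad := h.continuous_grad
  lower x := ha.trans (h.lower x)
  upper x := (h.upper x).trans hM
  grad_le x := (h.grad_le x).trans hK
  grad_mem := h.grad_mem
  remainder x v := (h.remainder x v).trans (by gcongr)

theorem RegularPos.continuous_prod_rpow {ι : Type*} [Fintype ι] {c : ι → ℝ}
    {V : ι → Submodule ℝ E} {a M K : ℝ} (ha : 0 < a) {u : ι → E → ℝ} {G : ι → E → E}
    (hu : ∀ i, RegularPos (V i) a M K (u i) (G i)) : Continuous fun y => ∏ i, u i y ^ c i :=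
  continuous_finsetProd _ fun i _ => (hu i).continuous_fun.rpow_const fun x =>
    Or.inl (ha.trans_le ((hu i).lower x)).ne'

theorem RegularPos.norm_prod_rpow_le {ι : Type*} [Fintype ι] {c : ι → ℝ} (hc : ∀ i, 0 ≤ c i)
    {V : ι → Submodule ℝ E} {a M K : ℝ} (ha : 0 < a) {u : ι → E → ℝ} {G : ι → E → E}
    (hu : ∀ i, RegularPos (V i) a M K (u i) (G i)) (x : E) :
    ‖∏ i, u i x ^ c i‖ ≤ ∏ i, M ^ c i := by
  have hpos : ∀ i, 0 ≤ u i x := fun i => ha.le.trans ((hu i).lower x)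
  rw [Real.norm_of_nonneg (Finset.prod_nonneg fun i _ => Real.rpow_nonneg (hpos i) _)]
  exact Finset.prod_le_prod (fun i _ => Real.rpow_nonneg (hpos i) _)
    fun i _ => Real.rpow_le_rpow (hpos i) ((hu i).upper x) (hc i)

end RegularPos

section HeatStep

variable {E : Type*} [NormedAddCommGroup E] [InnerProductSpace ℝ E] [FiniteDimensional ℝ E]
  [MeasurableSpace E] [BorelSpace E]

/-- One step of length `σ` of the Gaussian averaging operator. -/
def heatStep {X : Type*} [NormedAddCommGroup X] [NormedSpace ℝ X] (σ : ℝ) (u : E → X) (x : E) : X :=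
  ∫ z, u (x + σ • z) ∂(ProbabilityTheory.stdGaussian E)

theorem integrable_comp_add_smul {X : Type*} [NormedAddCommGroup X]
    {u : E → X} {M : ℝ} (hu : Continuous u) (hM : ∀ x, ‖u x‖ ≤ M) (σ : ℝ) (x : E) :
    Integrable (fun z => u (x + σ • z)) (ProbabilityTheory.stdGaussian E) :=
  Integrable.of_bound (C := M) (by fun_prop) (.of_forall fun z => hM _)

theorem continuous_heatStep {X : Type*} [NormedAddCommGroup X] [NormedSpace ℝ X]
    {u : E → X} {M : ℝ} (hu : Continuous u) (hM : ∀ x, ‖u x‖ ≤ M) (σ : ℝ) :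
    Continuous (heatStep σ u) := by
  refine continuous_of_dominated (bound := fun _ => M) (fun x => ?_) (fun x => ?_) ?_ ?_
  · exact (integrable_comp_add_smul hu hM σ x).aestronglyMeasurable
  · exact .of_forall fun z => hM _
  · exact integrable_const _
  · exact .of_forall fun z => by fun_prop

theorem norm_heatStep_le {X : Type*} [NormedAddCommGroup X] [NormedSpace ℝ X]
    {u : E → X} {M : ℝ} (hM : ∀ x, ‖u x‖ ≤ M) (σ : ℝ) (x : E) :
    ‖heatStep σ u x‖ ≤ M := by
  simpa [heatStep] using norm_integral_le_of_norm_le_const (μ := ProbabilityTheory.stdGaussian E)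
    (f := fun z => u (x + σ • z)) (.of_forall fun z => hM _)

theorem RegularPos.regularPos_heatStep {V : Submodule ℝ E} {a M K : ℝ} (ha : 0 ≤ a) {u : E → ℝ}
    {G : E → E}
    (h : RegularPos V a M K u G) (σ : ℝ) :
    RegularPos V a M K (heatStep σ u) (heatStep σ G) where
  continuous_fun := continuous_heatStep h.continuous_fun (h.norm_le ha) σ
  continuous_grad := continuous_heatStep h.continuous_grad h.grad_le σ
  lower x := by
    have := integral_mono (μ := ProbabilityTheory.stdGaussian E) (integrable_const a)
      (integrable_comp_add_smul h.continuous_fun (h.norm_le ha) σ x) fun z => h.lower _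
    simpa [heatStep] using this
  upper x := (le_abs_self _).trans (norm_heatStep_le (h.norm_le ha) σ x)
  grad_le x := norm_heatStep_le h.grad_le σ x
  grad_mem x := by
    have hi := integrable_comp_add_smul h.continuous_grad h.grad_le σ x
    have hcl : IsClosed (V : Set E) := V.closed_of_finiteDimensional
    exact V.convex.integral_mem hcl (.of_forall fun z => h.grad_mem _) hi
  remainder x v := by
    have hu := integrable_comp_add_smul h.continuous_fun (h.norm_le ha) σ
    have hG := integrable_comp_add_smul h.continuous_grad h.grad_le σ x
    have e : heatStep σ u (x + v) - heatStep σ u x - ⟪heatStep σ G x, v⟫ =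
        ∫ z, (u (x + σ • z + v) - u (x + σ • z) - ⟪G (x + σ • z), v⟫)
          ∂(ProbabilityTheory.stdGaussian E) := by
      have hu' : Integrable (fun z => u (x + σ • z + v)) (ProbabilityTheory.stdGaussian E) := by
        simpa only [add_right_comm x v] using hu (x + v)
      have h3 : ⟪heatStep σ G x, v⟫ =
          ∫ z, ⟪G (x + σ • z), v⟫ ∂(ProbabilityTheory.stdGaussian E) := by
        rw [heatStep, real_inner_comm, ← integral_inner hG]
        simp only [real_inner_comm]
      rw [integral_sub (by exact hu'.sub (hu x)) (hG.inner_const v), integral_sub hu' (hu x), h3]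
      simp only [heatStep, add_right_comm x v]
    rw [e, ← Real.norm_eq_abs]
    simpa using norm_integral_le_of_norm_le_const (μ := ProbabilityTheory.stdGaussian E)
      (.of_forall fun z => (Real.norm_eq_abs _).trans_le (h.remainder (x + σ • z) v))

theorem integrable_norm_pow_stdGaussian (k : ℕ) :
    Integrable (fun z : E => ‖z‖ ^ k) (ProbabilityTheory.stdGaussian E) := by
  have h := ProbabilityTheory.IsGaussian.memLp_id (ProbabilityTheory.stdGaussian E) (k : ℝ≥0∞)
    (by simp)
  exact h.integrable_norm_pow'

theorem integrable_inner_stdGaussian (w : E) :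
    Integrable (fun z : E => ⟪w, z⟫) (ProbabilityTheory.stdGaussian E) :=
  (ProbabilityTheory.IsGaussian.integrable_id (μ := ProbabilityTheory.stdGaussian E)).const_inner w

theorem integral_inner_stdGaussian (w : E) :
    ∫ z, ⟪w, z⟫ ∂(ProbabilityTheory.stdGaussian E) = 0 :=
  ProbabilityTheory.integral_strongDual_stdGaussian (innerSL ℝ w)

theorem integrable_inner_sq_stdGaussian (w : E) :
    Integrable (fun z : E => ⟪w, z⟫ ^ 2) (ProbabilityTheory.stdGaussian E) :=
  ((ProbabilityTheory.IsGaussian.memLp_two_id (μ := ProbabilityTheory.stdGaussian E)).const_inner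
    w).integrable_sq

theorem integral_inner_sq_stdGaussian (w : E) :
    ∫ z, ⟪w, z⟫ ^ 2 ∂(ProbabilityTheory.stdGaussian E) = ‖w‖ ^ 2 := by
  have h := ProbabilityTheory.variance_dual_stdGaussian (innerSL ℝ w)
  rw [ProbabilityTheory.variance_of_integral_eq_zero (by fun_prop)
    (ProbabilityTheory.integral_strongDual_stdGaussian _)] at h
  simpa using h

set_option maxHeartbeats 1000000 in
/-- Gaussian averaging of `∏ i, u i ^ c i` is controlled by the product of the averages, up to an
error of third order in the step `σ`. -/
theorem heatStep_prod_rpow_le {ι : Type*} [Fintype ι] (c : ι → ℝ) (hc : ∀ i, 0 ≤ c i)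
    (V : ι → Submodule ℝ E)
    (hV : ∀ v : ι → E, (∀ i, v i ∈ V i) → ‖∑ i, c i • v i‖ ^ 2 ≤ ∑ i, c i * ‖v i‖ ^ 2)
    {a M K : ℝ} (ha : 0 < a) (hM : 0 ≤ M) (hK : 0 ≤ K) :
    ∃ C, 0 ≤ C ∧ ∀ (σ : ℝ), 0 ≤ σ → σ ≤ 1 → ∀ (u : ι → E → ℝ) (G : ι → E → E),
      (∀ i, RegularPos (V i) a M K (u i) (G i)) → ∀ x,
      heatStep σ (fun y => ∏ i, u i y ^ c i) x ≤ ∏ i, heatStep σ (u i) x ^ c i + C * σ ^ 3 := by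
  set L := (2 * K + M) / a with hLdef
  have hL : 0 ≤ L := by positivity
  obtain ⟨C, hC0, hC⟩ := prod_one_add_rpow_le_of_eq_add c hc hL
  set γ := ProbabilityTheory.stdGaussian E with hγ
  set m2 := ∫ z : E, ‖z‖ ^ 2 ∂γ with hm2
  set m3 := ∫ z : E, ‖z‖ ^ 3 ∂γ with hm3
  have hm20 : 0 ≤ m2 := integral_nonneg fun z => by positivity
  have hm30 : 0 ≤ m3 := integral_nonneg fun z => by positivity
  set s := ∑ i, c i with hs
  have hs0 : 0 ≤ s := Finset.sum_nonneg fun i _ => hc i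
  set R := C * m3 + (a / (M + a))⁻¹ * (s * (L * m2) ^ 2) with hR
  have hR0 : 0 ≤ R := by positivity
  refine ⟨(∏ i, M ^ c i) * R, mul_nonneg (Finset.prod_nonneg fun i _ => by positivity) hR0,
    fun σ hσ0 hσ1 u G hu x => ?_⟩
  have hux : ∀ i y, 0 < u i y := fun i y => ha.trans_le ((hu i).lower y)
  set F := ∏ i, u i x ^ c i with hF
  have hF0 : 0 ≤ F := Finset.prod_nonneg fun i _ => Real.rpow_nonneg (hux i x).le _
  have hFM : F ≤ ∏ i, M ^ c i := Finset.prod_le_prod (fun i _ => Real.rpow_nonneg (hux i x).le _)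
    fun i _ => Real.rpow_le_rpow (hux i x).le ((hu i).upper x) (hc i)
  let e : E → ι → ℝ := fun z i => u i (x + σ • z) / u i x - 1
  let g : ι → E := fun i => (u i x)⁻¹ • G i x
  let l : E → ι → ℝ := fun z i => σ * ⟪g i, z⟫
  have hinv : ∀ i, (u i x)⁻¹ ≤ a⁻¹ := fun i => inv_anti₀ ha ((hu i).lower x)
  have hKL : a⁻¹ * K ≤ L := by
    rw [hLdef, div_eq_inv_mul]; gcongr; linarith
  have hgK : ∀ i, ‖g i‖ ≤ L := fun i => by
    refine le_trans ?_ hKL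
    rw [norm_smul, norm_inv, Real.norm_of_nonneg (hux i x).le]
    exact mul_le_mul (hinv i) ((hu i).grad_le x) (norm_nonneg _) (by positivity)
  have hel : ∀ z i, |e z i - l z i| ≤ a⁻¹ * K * (σ * ‖z‖) ^ 2 := fun z i => by
    have h1 : e z i - l z i = (u i x)⁻¹ * (u i (x + σ • z) - u i x - ⟪G i x, σ • z⟫) := by
      simp only [e, l, g, real_inner_smul_left, real_inner_smul_right]
      have := (hux i x).ne'
      field_simp
    rw [h1, abs_mul, abs_of_pos (inv_pos.2 (hux i x)), mul_assoc]
    refine mul_le_mul (hinv i) (((hu i).remainder x _).trans_eq ?_) (abs_nonneg _) (by positivity)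
    rw [norm_smul, Real.norm_of_nonneg hσ0]
  have hlK : ∀ z i, |l z i| ≤ a⁻¹ * K * (σ * ‖z‖) := fun z i => by
    have : ‖g i‖ ≤ a⁻¹ * K := by
      rw [norm_smul, norm_inv, Real.norm_of_nonneg (hux i x).le]
      exact mul_le_mul (hinv i) ((hu i).grad_le x) (norm_nonneg _) (by positivity)
    simp only [l]
    rw [abs_mul, abs_of_nonneg hσ0]
    calc σ * |⟪g i, z⟫| ≤ σ * (‖g i‖ * ‖z‖) := by gcongr; exact abs_real_inner_le_norm _ _
      _ ≤ σ * (a⁻¹ * K * ‖z‖) := by gcongr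
      _ = _ := by ring
  have he1 : ∀ z i, -1 < e z i := fun z i => by
    have := div_pos (hux i (x + σ • z)) (hux i x)
    simp only [e]; linarith
  have heM : ∀ z i, |e z i| ≤ a⁻¹ * M := fun z i => by
    have h1 : e z i = (u i x)⁻¹ * (u i (x + σ • z) - u i x) := by
      simp only [e]
      have := (hux i x).ne'
      field_simp
    rw [h1, abs_mul, abs_of_pos (inv_pos.2 (hux i x))]
    refine mul_le_mul (hinv i) ?_ (abs_nonneg _) (by positivity)
    rw [abs_le]
    constructor <;> linarith [hux i x, hux i (x + σ • z), (hu i).upper x, (hu i).upper (x + σ • z)]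
  have hLeq : L = 2 * (a⁻¹ * K) + a⁻¹ * M := by rw [hLdef]; ring
  have hKa : 0 ≤ a⁻¹ * K := by positivity
  have hMa : 0 ≤ a⁻¹ * M := by positivity
  have heL : ∀ z i, |e z i| ≤ L := fun z i => (heM z i).trans (by linarith)
  have heLt : ∀ z i, |e z i| ≤ L * (σ * ‖z‖) := fun z i => by
    have ht : 0 ≤ σ * ‖z‖ := by positivity
    rcases le_total (σ * ‖z‖) 1 with h | h
    · have : |e z i| ≤ |e z i - l z i| + |l z i| := by
        simpa using abs_add_le (e z i - l z i) (l z i)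
      have h3 := hel z i
      have h4 := hlK z i
      rw [hLeq]
      have h5 : a⁻¹ * K * (σ * ‖z‖) ^ 2 ≤ a⁻¹ * K * (σ * ‖z‖) := by
        apply mul_le_mul_of_nonneg_left _ hKa
        nlinarith
      nlinarith
    · refine (heM z i).trans ?_
      rw [hLeq]
      nlinarith
  have hpt : ∀ z, ∏ i, (1 + e z i) ^ c i ≤
      1 + ∑ i, c i * e z i + ((∑ i, c i * l z i) ^ 2 - ∑ i, c i * l z i ^ 2) / 2
        + C * (σ * ‖z‖) ^ 3 := fun z =>
    hC (e z) (l z) _ (by positivity) (he1 z) (heL z) (heLt z)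
      (fun i => (hlK z i).trans (by gcongr)) (fun i => (hel z i).trans (by gcongr))
  -- the linear parts
  have hquad : ∀ z, (∑ i, c i * l z i) ^ 2 - ∑ i, c i * l z i ^ 2 =
      σ ^ 2 * (⟪∑ i, c i • g i, z⟫ ^ 2 - ∑ i, c i * ⟪g i, z⟫ ^ 2) := fun z => by
    simp only [l, sum_inner, real_inner_smul_left, mul_sub, mul_pow, Finset.mul_sum]
    congr 1
    · rw [← mul_pow, Finset.mul_sum]
      congr 1
      exact Finset.sum_congr rfl fun i _ => by ring
    · exact Finset.sum_congr rfl fun i _ => by ring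
  have hint_u : ∀ i, Integrable (fun z => u i (x + σ • z)) γ := fun i =>
    integrable_comp_add_smul (hu i).continuous_fun ((hu i).norm_le ha.le) σ x
  have hint_e : ∀ i, Integrable (fun z => e z i) γ := fun i =>
    ((hint_u i).div_const _).sub (integrable_const _)
  set d : ι → ℝ := fun i => ∫ z, e z i ∂γ with hd
  have hd1 : ∀ i, 1 + d i = heatStep σ (u i) x / u i x := fun i => by
    simp only [hd, e]
    rw [integral_sub ((hint_u i).div_const _) (integrable_const _), integral_div]
    simp [heatStep, hγ]
  have hint_q : Integrable (fun z => (∑ i, c i * l z i) ^ 2 - ∑ i, c i * l z i ^ 2) γ := by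
    simp only [hquad]
    exact ((integrable_inner_sq_stdGaussian _).sub (integrable_finsetSum _ fun i _ =>
      (integrable_inner_sq_stdGaussian _).const_mul _)).const_mul _
  have hq : ∫ z, ((∑ i, c i * l z i) ^ 2 - ∑ i, c i * l z i ^ 2) ∂γ ≤ 0 := by
    simp only [hquad]
    rw [integral_const_mul, integral_sub (integrable_inner_sq_stdGaussian _)
      (integrable_finsetSum _ fun i _ => (integrable_inner_sq_stdGaussian _).const_mul _),
      integral_finsetSum _ fun i _ => (integrable_inner_sq_stdGaussian _).const_mul _]
    simp only [integral_const_mul, integral_inner_sq_stdGaussian]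
    have := hV g fun i => (V i).smul_mem _ ((hu i).grad_mem x)
    exact mul_nonpos_of_nonneg_of_nonpos (sq_nonneg _) (by linarith)
  have hint_t : Integrable (fun z : E => C * (σ * ‖z‖) ^ 3) γ := by
    simp only [mul_pow]
    exact ((integrable_norm_pow_stdGaussian 3).const_mul _).const_mul _
  have hint_s : Integrable (fun z => ∑ i, c i * e z i) γ :=
    integrable_finsetSum _ fun i _ => (hint_e i).const_mul _
  have hsplit : ∀ z, ∏ i, u i (x + σ • z) ^ c i = F * ∏ i, (1 + e z i) ^ c i := fun z => by
    rw [hF, ← Finset.prod_mul_distrib]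
    refine Finset.prod_congr rfl fun i _ => ?_
    rw [← Real.mul_rpow (hux i x).le (by linarith [he1 z i])]
    congr 1
    simp only [e]
    have := (hux i x).ne'
    field_simp
    ring
  have hprodint : Integrable (fun z => ∏ i, (1 + e z i) ^ c i) γ := by
    refine Integrable.of_bound (C := ∏ i, (1 + L) ^ c i) ?_ (.of_forall fun z => ?_)
    · refine Continuous.aestronglyMeasurable (continuous_finsetProd _ fun i _ => ?_)
      refine Continuous.rpow_const ?_ fun z => Or.inl (by linarith [he1 z i])
      have := (hu i).continuous_fun
      simp only [e]
      fun_prop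
    · rw [Real.norm_of_nonneg (Finset.prod_nonneg fun i _ =>
        Real.rpow_nonneg (by linarith [he1 z i]) _)]
      refine Finset.prod_le_prod (fun i _ => Real.rpow_nonneg (by linarith [he1 z i]) _)
        fun i _ => Real.rpow_le_rpow (by linarith [he1 z i]) ?_ (hc i)
      linarith [(abs_le.1 (heL z i)).2]
  have hmain : ∫ z, ∏ i, (1 + e z i) ^ c i ∂γ ≤ 1 + ∑ i, c i * d i + C * m3 * σ ^ 3 := by
    have i1 : Integrable (fun z => 1 + ∑ i, c i * e z i) γ := (integrable_const _).add hint_s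
    have i2 : Integrable (fun z => 1 + ∑ i, c i * e z i +
      ((∑ i, c i * l z i) ^ 2 - ∑ i, c i * l z i ^ 2) / 2) γ := i1.add (hint_q.div_const 2)
    have h1 := integral_mono hprodint (i2.add hint_t) hpt
    refine h1.trans ?_
    have i3 : ∫ z, C * (σ * ‖z‖) ^ 3 ∂γ = C * m3 * σ ^ 3 := by
      simp only [mul_pow, integral_const_mul]
      ring
    have i4 : ∫ z, ∑ i, c i * e z i ∂γ = ∑ i, c i * d i := by
      rw [integral_finsetSum _ fun i _ => (hint_e i).const_mul _]
      simp only [integral_const_mul, hd]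
    simp only [Pi.add_apply]
    rw [integral_add i2 hint_t, integral_add i1 (hint_q.div_const 2),
      integral_add (integrable_const _) hint_s, i3, i4, integral_div]
    simp only [integral_const, probReal_univ, one_smul]
    linarith
  have hdabs : ∀ i, |d i| ≤ L * m2 * σ ^ 2 := fun i => by
    have hl0 : ∫ z, l z i ∂γ = 0 := by
      simp only [l, integral_const_mul, hγ, integral_inner_stdGaussian, mul_zero]
    have hl1 : Integrable (fun z => l z i) γ := (integrable_inner_stdGaussian _).const_mul _
    have h1 : d i = ∫ z, (e z i - l z i) ∂γ := by
      rw [integral_sub (hint_e i) hl1, hl0, sub_zero]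
    rw [h1, ← Real.norm_eq_abs]
    have h2 : Integrable (fun z : E => L * (σ * ‖z‖) ^ 2) γ := by
      simp only [mul_pow]
      exact ((integrable_norm_pow_stdGaussian 2).const_mul _).const_mul _
    refine (norm_integral_le_of_norm_le h2 (.of_forall fun z => ?_)).trans_eq ?_
    · rw [Real.norm_eq_abs]
      exact (hel z i).trans (by gcongr)
    · simp only [mul_pow, integral_const_mul]
      ring
  have hdb : ∀ i, a / (M + a) ≤ 1 + d i := fun i => by
    have hr := (hu i).regularPos_heatStep ha.le σ
    rw [hd1]
    exact div_le_div₀ (ha.le.trans (hr.lower x)) (hr.lower x) (hux i x)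
      (by linarith [(hu i).upper x])
  have hlow := le_prod_one_add_rpow c hc (b := a / (M + a)) (by positivity) d hdb
  have hdsq : ∑ i, c i * d i ^ 2 ≤ s * (L * m2) ^ 2 * σ ^ 3 := by
    rw [hs, Finset.sum_mul, Finset.sum_mul]
    refine Finset.sum_le_sum fun i _ => ?_
    rw [mul_assoc]
    refine mul_le_mul_of_nonneg_left ?_ (hc i)
    calc d i ^ 2 = |d i| ^ 2 := (sq_abs _).symm
      _ ≤ (L * m2 * σ ^ 2) ^ 2 := pow_le_pow_left₀ (abs_nonneg _) (hdabs i) 2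
      _ = (L * m2) ^ 2 * σ ^ 3 * σ := by ring
      _ ≤ (L * m2) ^ 2 * σ ^ 3 * 1 := by gcongr
      _ = _ := mul_one _
  have hfin : ∫ z, ∏ i, (1 + e z i) ^ c i ∂γ ≤ ∏ i, (1 + d i) ^ c i + R * σ ^ 3 := by
    have := mul_le_mul_of_nonneg_left hdsq (show 0 ≤ (a / (M + a))⁻¹ by positivity)
    have e1 : R * σ ^ 3 = C * m3 * σ ^ 3 + (a / (M + a))⁻¹ * (s * (L * m2) ^ 2 * σ ^ 3) := by
      rw [hR]; ring
    linarith
  have hback : F * ∏ i, (1 + d i) ^ c i = ∏ i, heatStep σ (u i) x ^ c i := by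
    rw [hF, ← Finset.prod_mul_distrib]
    refine Finset.prod_congr rfl fun i _ => ?_
    rw [← Real.mul_rpow (hux i x).le ((by positivity : 0 ≤ a / (M + a)).trans (hdb i)), hd1]
    congr 1
    have := (hux i x).ne'
    field_simp
  calc heatStep σ (fun y => ∏ i, u i y ^ c i) x
      = F * ∫ z, ∏ i, (1 + e z i) ^ c i ∂γ := by
        simp only [heatStep, hsplit, integral_const_mul, hγ]
    _ ≤ F * (∏ i, (1 + d i) ^ c i + R * σ ^ 3) := mul_le_mul_of_nonneg_left hfin hF0
    _ = ∏ i, heatStep σ (u i) x ^ c i + F * (R * σ ^ 3) := by rw [mul_add, hback]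
    _ ≤ _ := by
      rw [mul_assoc]
      gcongr

theorem conv_map_smul_stdGaussian (a b : ℝ) :
    ((ProbabilityTheory.stdGaussian E).map (a • ·)) ∗ ((ProbabilityTheory.stdGaussian E).map (b • ·))
      = (ProbabilityTheory.stdGaussian E).map (√(a ^ 2 + b ^ 2) • ·) := by
  have (r : ℝ) : IsProbabilityMeasure ((ProbabilityTheory.stdGaussian E).map (r • ·)) :=
    Measure.isProbabilityMeasure_map (by fun_prop)
  apply Measure.ext_of_charFun
  ext t
  simp only [charFun_conv, charFun_map_smul, ProbabilityTheory.charFun_stdGaussian, norm_smul,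
    Real.norm_eq_abs, ← Complex.exp_add]
  congr 1
  norm_cast
  rw [mul_pow, mul_pow, mul_pow, sq_abs, sq_abs, sq_abs, Real.sq_sqrt (by positivity)]
  ring

theorem heatStep_heatStep {u : E → ℝ} {M : ℝ} (hu : Continuous u) (hM : ∀ x, ‖u x‖ ≤ M)
    (a b : ℝ) : heatStep a (heatStep b u) = heatStep √(a ^ 2 + b ^ 2) u := by
  have (r : ℝ) : IsProbabilityMeasure ((ProbabilityTheory.stdGaussian E).map (r • ·)) :=
    Measure.isProbabilityMeasure_map (by fun_prop)
  ext x
  have h := integral_conv (μ := (ProbabilityTheory.stdGaussian E).map (a • ·))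
    (ν := (ProbabilityTheory.stdGaussian E).map (b • ·)) (f := fun y => u (x + y))
    (Integrable.of_bound (C := M) (by fun_prop) (.of_forall fun z => hM _))
  rw [conv_map_smul_stdGaussian, integral_map (by fun_prop) (by fun_prop)] at h
  simp only [heatStep]
  rw [h, integral_map (by fun_prop)]
  · refine integral_congr_ae (.of_forall fun z => ?_)
    simp only
    rw [integral_map (by fun_prop) (by fun_prop)]
    simp only [add_assoc]
  · have hc : Continuous (heatStep (E := E) b u) := continuous_heatStep hu hM b
    have : (fun x_1 => ∫ y, u (x + (x_1 + y)) ∂((ProbabilityTheory.stdGaussian E).map (b • ·))) =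
        fun y => heatStep b u (x + y) := by
      ext y
      rw [integral_map (by fun_prop) (by fun_prop)]
      simp only [heatStep, add_assoc]
    rw [this]
    fun_prop

theorem iterate_heatStep {u : E → ℝ} {M : ℝ} (hu : Continuous u) (hM : ∀ x, ‖u x‖ ≤ M)
    {σ : ℝ} (hσ : 0 ≤ σ) (j : ℕ) : (heatStep σ)^[j] u = heatStep (√j * σ) u := by
  induction j with
  | zero => ext x; simp [heatStep]
  | succ j ih =>
    rw [Function.iterate_succ_apply', ih, heatStep_heatStep hu hM]
    congr 1
    rw [mul_pow, Real.sq_sqrt (by positivity), Nat.cast_succ,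
      show σ ^ 2 + j * σ ^ 2 = (j + 1) * σ ^ 2 by ring, Real.sqrt_mul (by positivity),
      Real.sqrt_sq hσ]

theorem RegularPos.iterate {V : Submodule ℝ E} {a M K : ℝ} (ha : 0 ≤ a) {u : E → ℝ} {G : E → E}
    (h : RegularPos V a M K u G) (σ : ℝ) (j : ℕ) :
    RegularPos V a M K ((heatStep σ)^[j] u) ((heatStep σ)^[j] G) := by
  induction j with
  | zero => exact h
  | succ j ih =>
    rw [Function.iterate_succ_apply', Function.iterate_succ_apply']
    exact ih.regularPos_heatStep ha σ

theorem heatStep_mono_add_const {f g : E → ℝ} {M D : ℝ} (hf : Continuous f) (hg : Continuous g)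
    (hfM : ∀ x, ‖f x‖ ≤ M) (hgM : ∀ x, ‖g x‖ ≤ M) (h : ∀ x, f x ≤ g x + D) (σ : ℝ) (x : E) :
    heatStep σ f x ≤ heatStep σ g x + D := by
  have h1 := integral_mono (integrable_comp_add_smul hf hfM σ x)
    ((integrable_comp_add_smul hg hgM σ x).add (integrable_const D)) fun z => h (x + σ • z)
  simp only [Pi.add_apply] at h1
  rw [integral_add (integrable_comp_add_smul hg hgM σ x) (integrable_const D)] at h1
  simpa [heatStep] using h1

/-- Geometric Brascamp–Lieb inequality for regular functions. -/
theorem integral_prod_rpow_le_of_regularPos {ι : Type*} [Fintype ι] (c : ι → ℝ)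
    (hc : ∀ i, 0 ≤ c i) (V : ι → Submodule ℝ E)
    (hV : ∀ v : ι → E, (∀ i, v i ∈ V i) → ‖∑ i, c i • v i‖ ^ 2 ≤ ∑ i, c i * ‖v i‖ ^ 2)
    {a M K : ℝ} (ha : 0 < a) (hM : 0 ≤ M) (hK : 0 ≤ K) (u : ι → E → ℝ) (G : ι → E → E)
    (hu : ∀ i, RegularPos (V i) a M K (u i) (G i)) :
    ∫ z, ∏ i, u i z ^ c i ∂(ProbabilityTheory.stdGaussian E) ≤
      ∏ i, (∫ z, u i z ∂(ProbabilityTheory.stdGaussian E)) ^ c i := by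
  obtain ⟨C, hC0, hC⟩ := heatStep_prod_rpow_le c hc V hV ha hM hK
  set F : E → ℝ := fun y => ∏ i, u i y ^ c i with hF
  have hFc : Continuous F := RegularPos.continuous_prod_rpow ha hu
  have hFb := RegularPos.norm_prod_rpow_le hc ha hu
  have hiter : ∀ σ : ℝ, 0 ≤ σ → σ ≤ 1 → ∀ (j : ℕ) (x : E), (heatStep σ)^[j] F x ≤
      ∏ i, (heatStep σ)^[j] (u i) x ^ c i + j * (C * σ ^ 3) := by
    intro σ h0 h1 j
    induction j with
    | zero => intro x; simp [hF]
    | succ j ih =>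
      intro x
      have hreg := fun i => (hu i).iterate ha.le σ j
      have hFj : Continuous ((heatStep σ)^[j] F) ∧ ∀ x, ‖(heatStep σ)^[j] F x‖ ≤ ∏ i, M ^ c i := by
        rw [iterate_heatStep hFc hFb h0]
        exact ⟨continuous_heatStep hFc hFb _, norm_heatStep_le hFb _⟩
      have s1 := heatStep_mono_add_const hFj.1 (RegularPos.continuous_prod_rpow ha hreg) hFj.2
        (RegularPos.norm_prod_rpow_le hc ha hreg) ih σ x
      have s2 := hC σ h0 h1 _ _ hreg x
      simp only [Function.iterate_succ_apply']
      push_cast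
      linarith
  have hN : ∀ N : ℕ, ∫ z, F z ∂(ProbabilityTheory.stdGaussian E) ≤
      ∏ i, (∫ z, u i z ∂(ProbabilityTheory.stdGaussian E)) ^ c i + C * (√(N + 1 : ℝ))⁻¹ := by
    intro N
    set r := √(N + 1 : ℝ) with hr
    have hr2 : r ^ 2 = N + 1 := Real.sq_sqrt (by positivity)
    have hr1 : 1 ≤ r := by rw [hr, Real.one_le_sqrt]; linarith [Nat.cast_nonneg (α := ℝ) N]
    have hr0 : 0 < r := by linarith
    have h := hiter r⁻¹ (by positivity) (inv_le_one_of_one_le₀ hr1) (N + 1) 0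
    have hmul : √((N + 1 : ℕ) : ℝ) * r⁻¹ = 1 := by
      push_cast
      exact mul_inv_cancel₀ hr0.ne'
    simp only [iterate_heatStep hFc hFb (inv_nonneg.2 hr0.le),
      fun i => iterate_heatStep (hu i).continuous_fun ((hu i).norm_le ha.le) (inv_nonneg.2 hr0.le),
      hmul] at h
    have e1 : ((N + 1 : ℕ) : ℝ) * (C * r⁻¹ ^ 3) = C * r⁻¹ := by
      push_cast
      rw [← hr2]
      field_simp
    rw [e1] at h
    simpa [heatStep] using h
  have hlim : Filter.Tendsto (fun N : ℕ =>
      ∏ i, (∫ z, u i z ∂(ProbabilityTheory.stdGaussian E)) ^ c i + C * (√(N + 1 : ℝ))⁻¹)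
      Filter.atTop (nhds (∏ i, (∫ z, u i z ∂(ProbabilityTheory.stdGaussian E)) ^ c i + C * 0)) := by
    refine tendsto_const_nhds.add (Filter.Tendsto.const_mul _ ?_)
    refine Filter.Tendsto.inv_tendsto_atTop (Real.tendsto_sqrt_atTop.comp ?_)
    exact Filter.tendsto_atTop_add_const_right _ _ tendsto_natCast_atTop_atTop
  simpa using ge_of_tendsto' hlim hN

end HeatStep

section Adjoint

variable {E F : Type*} [NormedAddCommGroup E] [InnerProductSpace ℝ E] [FiniteDimensional ℝ E]
  [NormedAddCommGroup F] [InnerProductSpace ℝ F] [FiniteDimensional ℝ F]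

theorem norm_apply_le_of_norm_adjoint_le (B : E →L[ℝ] F) (hB : ∀ y, ‖B.adjoint y‖ ≤ ‖y‖) (x : E) :
    ‖B x‖ ≤ ‖x‖ := by
  have h1 : ‖B x‖ ^ 2 = ⟪x, B.adjoint (B x)⟫ := by
    rw [ContinuousLinearMap.adjoint_inner_right, real_inner_self_eq_norm_sq]
  have h2 := real_inner_le_norm x (B.adjoint (B x))
  have h3 := mul_le_mul_of_nonneg_left (hB (B x)) (norm_nonneg x)
  rcases (norm_nonneg (B x)).eq_or_lt with h | h
  · rw [← h]; exact norm_nonneg x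
  · nlinarith

theorem norm_sum_smul_sq_le_of_range_adjoint {ι : Type*} [Fintype ι] {F : ι → Type*}
    [∀ i, NormedAddCommGroup (F i)] [∀ i, InnerProductSpace ℝ (F i)]
    [∀ i, FiniteDimensional ℝ (F i)] (B : ∀ i, E →L[ℝ] F i)
    (hB : ∀ i y, ‖(B i).adjoint y‖ = ‖y‖) (c : ι → ℝ) (hc : ∀ i, 0 ≤ c i)
    (hsum : ∀ x, ∑ i, c i * ‖B i x‖ ^ 2 ≤ ‖x‖ ^ 2) (v : ι → E)
    (hv : ∀ i, v i ∈ LinearMap.range ((B i).adjoint : F i →ₗ[ℝ] E)) :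
    ‖∑ i, c i • v i‖ ^ 2 ≤ ∑ i, c i * ‖v i‖ ^ 2 := by
  choose y hy using hv
  set w := ∑ i, c i • v i with hw
  have h1 : ‖w‖ ^ 2 = ∑ i, c i * ⟪y i, B i w⟫ := by
    rw [← real_inner_self_eq_norm_sq]
    nth_rewrite 1 [hw]
    rw [sum_inner]
    refine Finset.sum_congr rfl fun i _ => ?_
    rw [real_inner_smul_left, ← hy i]
    congr 1
    exact (B i).adjoint_inner_left w (y i)
  have h2 : 0 ≤ ∑ i, c i * ‖y i - B i w‖ ^ 2 :=
    Finset.sum_nonneg fun i _ => mul_nonneg (hc i) (sq_nonneg _)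
  have h3 : ∀ i, ‖v i‖ = ‖y i‖ := fun i => by rw [← hy i]; exact hB i (y i)
  have h4 : ∑ i, c i * ‖y i - B i w‖ ^ 2 = ∑ i, c i * ‖v i‖ ^ 2 - 2 * ∑ i, c i * ⟪y i, B i w⟫ +
      ∑ i, c i * ‖B i w‖ ^ 2 := by
    rw [Finset.mul_sum, ← Finset.sum_sub_distrib, ← Finset.sum_add_distrib]
    refine Finset.sum_congr rfl fun i _ => ?_
    rw [norm_sub_sq_real, h3]
    ring
  have := hsum w
  linarith

theorem RegularPos.comp_of_norm_adjoint {a M K : ℝ} (hK : 0 ≤ K) {u : F → ℝ} {G : F → F}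
    (h : RegularPos ⊤ a M K u G) (B : E →L[ℝ] F) (hB : ∀ y, ‖B.adjoint y‖ = ‖y‖) :
    RegularPos (LinearMap.range (B.adjoint : F →ₗ[ℝ] E)) a M K (fun x => u (B x))
      (fun x => B.adjoint (G (B x))) where
  continuous_fun := h.continuous_fun.comp B.continuous
  continuous_grad := B.adjoint.continuous.comp (h.continuous_grad.comp B.continuous)
  lower x := h.lower _
  upper x := h.upper _
  grad_le x := (hB _).trans_le (h.grad_le _)
  grad_mem x := LinearMap.mem_range_self _ _
  remainder x v := by
    rw [ContinuousLinearMap.adjoint_inner_left, map_add]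
    refine (h.remainder _ _).trans ?_
    gcongr
    exact norm_apply_le_of_norm_adjoint_le B (fun y => (hB y).le) v

/-- Smoothing a compactly supported smooth function into a regular positive one. -/
theorem exists_regularPos_sqrt {g : F → ℝ} (hg : ContDiff ℝ (⊤ : ℕ∞) g) (hgs : HasCompactSupport g)
    {ε : ℝ} (hε : 0 < ε) :
    ∃ M K G, 0 ≤ M ∧ 0 ≤ K ∧ RegularPos ⊤ ε M K (fun x => √(g x ^ 2 + ε ^ 2)) G := by
  set u : F → ℝ := fun x => √(g x ^ 2 + ε ^ 2) with hu
  have hpos : ∀ x, 0 < g x ^ 2 + ε ^ 2 := fun x => by positivity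
  have hud : ContDiff ℝ (⊤ : ℕ∞) u := by
    refine ContDiff.sqrt (by fun_prop) fun x => (hpos x).ne'
  have hus : HasCompactSupport fun x => u x - ε := by
    have : (fun x => u x - ε) = (fun t : ℝ => √(t ^ 2 + ε ^ 2) - ε) ∘ g := rfl
    rw [this]
    refine hgs.comp_left ?_
    simp [Real.sqrt_sq hε.le]
  have hfd : fderiv ℝ u = fderiv ℝ fun x => u x - ε := by
    funext x
    exact (fderiv_sub_const ε).symm
  have hfs : HasCompactSupport (fderiv ℝ u) := by
    rw [hfd]; exact hus.fderiv ℝ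
  have hfdc : ContDiff ℝ (⊤ : ℕ∞) (fderiv ℝ u) := hud.fderiv_right (by simp)
  obtain ⟨M, hM⟩ := (hus.exists_bound_of_continuous (hud.continuous.sub continuous_const))
  obtain ⟨K1, hK1⟩ := hfs.exists_bound_of_continuous hfdc.continuous
  obtain ⟨K2, hK2⟩ := hfdc.lipschitzWith_of_hasCompactSupport hfs (by simp)
  have hM0 : 0 ≤ M := (norm_nonneg _).trans (hM 0)
  have hK10 : 0 ≤ K1 := (norm_nonneg _).trans (hK1 0)
  refine ⟨M + ε, K1 + K2, fun x => (InnerProductSpace.toDual ℝ F).symm (fderiv ℝ u x),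
    by positivity, by positivity, ?_⟩
  constructor
  · exact hud.continuous
  · exact (LinearIsometryEquiv.continuous _).comp hfdc.continuous
  · intro x
    exact Real.le_sqrt_of_sq_le (by nlinarith [sq_nonneg (g x)])
  · intro x
    have := (le_abs_self _).trans (hM x)
    linarith
  · intro x
    rw [LinearIsometryEquiv.norm_map]
    exact (hK1 x).trans (by simp)
  · intro x; trivial
  · intro x v
    rw [InnerProductSpace.toDual_symm_apply]
    have hdiff : ∀ y, DifferentiableAt ℝ u y := fun y => (hud.differentiable (by simp)) y
    have h := (convex_closedBall x ‖v‖).norm_image_sub_le_of_norm_fderiv_le' (𝕜 := ℝ) (f := u)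
      (φ := fderiv ℝ u x) (C := K2 * ‖v‖) (fun y _ => hdiff y) (fun y hy => by
        refine (hK2.norm_sub_le y x).trans ?_
        gcongr
        simpa [dist_eq_norm] using hy) (x := x) (y := x + v) (by simp) (by simp)
    rw [← Real.norm_eq_abs]
    simp only [add_sub_cancel_left] at h
    refine h.trans ?_
    have : (0 : ℝ) ≤ K1 * ‖v‖ ^ 2 := by positivity
    nlinarith

end Adjoint

section Geometric

variable {E : Type*} [NormedAddCommGroup E] [InnerProductSpace ℝ E] [FiniteDimensional ℝ E]
  [MeasurableSpace E] [BorelSpace E]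

variable {F : Type*} [NormedAddCommGroup F] [InnerProductSpace ℝ F] [FiniteDimensional ℝ F]
  [MeasurableSpace F] [BorelSpace F]

theorem map_stdGaussian_of_norm_adjoint (B : E →L[ℝ] F) (hB : ∀ y, ‖B.adjoint y‖ = ‖y‖) :
    (ProbabilityTheory.stdGaussian E).map B = ProbabilityTheory.stdGaussian F := by
  have : IsProbabilityMeasure ((ProbabilityTheory.stdGaussian E).map B) :=
    Measure.isProbabilityMeasure_map (by fun_prop)
  apply Measure.ext_of_charFun
  ext t
  have h : charFun ((ProbabilityTheory.stdGaussian E).map B) t =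
      charFun (ProbabilityTheory.stdGaussian E) (B.adjoint t) := by
    rw [charFun_apply, charFun_apply, integral_map (by fun_prop) (by fun_prop)]
    simp only [ContinuousLinearMap.adjoint_inner_right]
  rw [h, ProbabilityTheory.charFun_stdGaussian, ProbabilityTheory.charFun_stdGaussian, hB]

theorem abs_sqrt_sq_add_sq_sub_le {f g ε : ℝ} (hf : 0 ≤ f) (hε : 0 ≤ ε) :
    |f - √(g ^ 2 + ε ^ 2)| ≤ |f - g| + ε := by
  have h1 : |g| ≤ √(g ^ 2 + ε ^ 2) := Real.abs_le_sqrt (by nlinarith)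
  have h2 : √(g ^ 2 + ε ^ 2) ≤ |g| + ε := by
    rw [Real.sqrt_le_left (by positivity)]
    nlinarith [abs_nonneg g, sq_abs g, mul_nonneg (abs_nonneg g) hε]
  have h3 := abs_sub_abs_le_abs_sub f g
  have h4 := abs_sub_abs_le_abs_sub g f
  rw [abs_of_nonneg hf] at h3 h4
  rw [abs_sub_comm g f] at h4
  rw [abs_le]
  constructor <;> linarith

/-- Regular positive functions approximate nonnegative integrable functions. -/
theorem exists_seq_regularPos {f : F → ℝ} (hf0 : ∀ x, 0 ≤ f x)
    (hf : Integrable f (ProbabilityTheory.stdGaussian F)) :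
    ∃ u : ℕ → F → ℝ, (∀ k, ∃ a M K G, 0 < a ∧ 0 ≤ M ∧ 0 ≤ K ∧ RegularPos ⊤ a M K (u k) G) ∧
      (∀ᵐ x ∂(ProbabilityTheory.stdGaussian F),
        Filter.Tendsto (fun k => u k x) Filter.atTop (nhds (f x))) ∧
      Filter.Tendsto (fun k => ∫ x, u k x ∂(ProbabilityTheory.stdGaussian F)) Filter.atTop
        (nhds (∫ x, f x ∂(ProbabilityTheory.stdGaussian F))) := by
  set γ := ProbabilityTheory.stdGaussian F with hγ
  have hmem : MemLp f 1 γ := memLp_one_iff_integrable.2 hf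
  have happ : ∀ k : ℕ, ∃ u : F → ℝ,
      (∃ a M K G, 0 < a ∧ 0 ≤ M ∧ 0 ≤ K ∧ RegularPos ⊤ a M K u G) ∧
      eLpNorm (u - f) 1 γ ≤ ENNReal.ofReal (2 * (1 / ((k : ℝ) + 1))) := by
    intro k
    have hε : (0 : ℝ) < 1 / ((k : ℝ) + 1) := by positivity
    obtain ⟨g, hgs, hg, hgf⟩ := hmem.exist_eLpNorm_sub_le (by simp) le_rfl hε
    obtain ⟨M, K, G, hM, hK, hreg⟩ := exists_regularPos_sqrt hg hgs hε
    refine ⟨_, ⟨_, M, K, G, hε, hM, hK, hreg⟩, ?_⟩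
    set ε := 1 / ((k : ℝ) + 1)
    calc eLpNorm ((fun x => √(g x ^ 2 + ε ^ 2)) - f) 1 γ
        ≤ eLpNorm ((fun x => |f x - g x|) + fun _ => ε) 1 γ := by
          refine eLpNorm_mono fun x => ?_
          simp only [Pi.sub_apply, Pi.add_apply, Real.norm_eq_abs]
          rw [abs_sub_comm]
          exact (abs_sqrt_sq_add_sq_sub_le (hf0 x) hε.le).trans (le_abs_self _)
      _ ≤ eLpNorm (fun x => |f x - g x|) 1 γ + eLpNorm (fun _ => ε) 1 γ := by
          refine eLpNorm_add_le ?_ (by fun_prop) le_rfl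
          exact (hmem.aestronglyMeasurable.sub hg.continuous.aestronglyMeasurable).norm
      _ ≤ ENNReal.ofReal ε + ENNReal.ofReal ε := by
          refine add_le_add ?_ ?_
          · exact (eLpNorm_norm (f - g)).trans_le hgf
          · refine (eLpNorm_const ε (by simp) (NeZero.ne _)).trans_le ?_
            simp [Real.enorm_eq_ofReal hε.le]
      _ = _ := by rw [← ENNReal.ofReal_add hε.le hε.le]; ring_nf
  choose u hu hlim using happ
  have hint : ∀ k, Integrable (u k) γ := fun k => by
    obtain ⟨a, M, K, G, ha, hM, hK, h⟩ := hu k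
    exact Integrable.of_bound (C := M) h.continuous_fun.aestronglyMeasurable
      (.of_forall fun x => h.norm_le ha.le x)
  have htend : Filter.Tendsto (fun k => eLpNorm (u k - f) 1 γ) Filter.atTop (nhds 0) := by
    refine tendsto_of_tendsto_of_tendsto_of_le_of_le tendsto_const_nhds ?_ (fun _ => zero_le) hlim
    have h1 : Filter.Tendsto (fun k : ℕ => 2 * (1 / ((k : ℝ) + 1))) Filter.atTop (nhds (2 * 0)) :=
      tendsto_one_div_add_atTop_nhds_zero_nat.const_mul 2
    simpa using ENNReal.tendsto_ofReal h1
  have hmeas := tendstoInMeasure_of_tendsto_eLpNorm one_ne_zero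
    (fun k => (hint k).aestronglyMeasurable) hf.aestronglyMeasurable htend
  obtain ⟨ns, hns, hae⟩ := hmeas.exists_seq_tendsto_ae
  refine ⟨fun k => u (ns k), fun k => hu _, hae, ?_⟩
  have hI := tendsto_integral_of_L1' f hf.aestronglyMeasurable (.of_forall hint) htend
  exact hI.comp hns.tendsto_atTop

/-- The geometric Brascamp–Lieb inequality for the standard Gaussian measure. -/
theorem lintegral_prod_rpow_comp_le {ι : Type*} [Fintype ι] {F : ι → Type*}
    [∀ i, NormedAddCommGroup (F i)] [∀ i, InnerProductSpace ℝ (F i)]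
    [∀ i, FiniteDimensional ℝ (F i)] [∀ i, MeasurableSpace (F i)] [∀ i, BorelSpace (F i)]
    (B : ∀ i, E →L[ℝ] F i) (hB : ∀ i y, ‖(B i).adjoint y‖ = ‖y‖) (c : ι → ℝ) (hc : ∀ i, 0 < c i)
    (hsum : ∀ x, ∑ i, c i * ‖B i x‖ ^ 2 ≤ ‖x‖ ^ 2) (f : ∀ i, F i → ℝ) (hf0 : ∀ i x, 0 ≤ f i x)
    (hf : ∀ i, Integrable (f i) (ProbabilityTheory.stdGaussian (F i))) :
    ∫⁻ x, ENNReal.ofReal (∏ i, f i (B i x) ^ c i) ∂(ProbabilityTheory.stdGaussian E) ≤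
      ∏ i, ENNReal.ofReal (∫ y, f i y ∂(ProbabilityTheory.stdGaussian (F i))) ^ c i := by
  set γ := ProbabilityTheory.stdGaussian E with hγ
  choose u hreg hae hlim using fun i => exists_seq_regularPos (hf0 i) (hf i)
  choose a M K G ha hM hK hreg using hreg
  have hcont : ∀ i k, Continuous (u i k) := fun i k => (hreg i k).continuous_fun
  have hmap := fun i => map_stdGaussian_of_norm_adjoint (B i) (hB i)
  have hreal : ∀ k, ∫ x, ∏ i, u i k (B i x) ^ c i ∂γ ≤
      ∏ i, (∫ y, u i k y ∂(ProbabilityTheory.stdGaussian (F i))) ^ c i := by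
    intro k
    have hb := integral_prod_rpow_le_of_regularPos (E := E) c (fun i => (hc i).le)
      (fun i => LinearMap.range ((B i).adjoint : F i →ₗ[ℝ] E))
      (norm_sum_smul_sq_le_of_range_adjoint B hB c (fun i => (hc i).le) hsum)
      (a := (∑ i, (a i k)⁻¹ + 1)⁻¹) (M := ∑ i, M i k) (K := ∑ i, K i k)
      (by have := Finset.sum_nonneg (s := Finset.univ) fun i _ => (inv_pos.2 (ha i k)).le
          positivity)
      (Finset.sum_nonneg fun i _ => hM i k) (Finset.sum_nonneg fun i _ => hK i k)
      (fun i x => u i k (B i x)) (fun i x => (B i).adjoint (G i k (B i x))) (fun i => by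
        refine ((hreg i k).comp_of_norm_adjoint (hK i k) (B i) (hB i)).mono ?_ ?_ ?_
        · refine inv_le_of_inv_le₀ (ha i k) ?_
          have := Finset.single_le_sum (f := fun i => (a i k)⁻¹)
            (fun i _ => (inv_pos.2 (ha i k)).le) (Finset.mem_univ i)
          linarith
        · exact Finset.single_le_sum (f := fun i => M i k) (fun i _ => hM i k) (Finset.mem_univ i)
        · exact Finset.single_le_sum (f := fun i => K i k) (fun i _ => hK i k) (Finset.mem_univ i))
    refine hb.trans_eq (Finset.prod_congr rfl fun i _ => ?_)
    rw [← hmap i, integral_map (by fun_prop) (hcont i k).aestronglyMeasurable]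
  have hu0 : ∀ i k x, 0 < u i k x := fun i k x => (ha i k).trans_le ((hreg i k).lower x)
  have hprodc : ∀ k, Continuous fun x => ∏ i, u i k (B i x) ^ c i := fun k =>
    continuous_finsetProd _ fun i _ =>
      ((hcont i k).comp (B i).continuous).rpow_const fun x => .inr (hc i).le
  have hprodint : ∀ k, Integrable (fun x => ∏ i, u i k (B i x) ^ c i) γ := fun k => by
    refine Integrable.of_bound (C := ∏ i, M i k ^ c i) (hprodc k).aestronglyMeasurable
      (.of_forall fun x => ?_)
    rw [Real.norm_of_nonneg (Finset.prod_nonneg fun i _ => Real.rpow_nonneg (hu0 i k _).le _)]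
    exact Finset.prod_le_prod (fun i _ => Real.rpow_nonneg (hu0 i k _).le _) fun i _ =>
      Real.rpow_le_rpow (hu0 i k _).le ((hreg i k).upper _) (hc i).le
  have hae' : ∀ᵐ x ∂γ, ENNReal.ofReal (∏ i, f i (B i x) ^ c i) =
      Filter.liminf (fun k => ENNReal.ofReal (∏ i, u i k (B i x) ^ c i)) Filter.atTop := by
    have h : ∀ᵐ x ∂γ, ∀ i, Filter.Tendsto (fun k => u i k (B i x)) Filter.atTop
        (nhds (f i (B i x))) := by
      rw [ae_all_iff]
      intro i
      have := hae i
      rw [← hmap i] at this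
      exact ae_of_ae_map (by fun_prop) this
    filter_upwards [h] with x hx
    refine (Filter.Tendsto.liminf_eq (ENNReal.tendsto_ofReal ?_)).symm
    exact tendsto_finsetProd _ fun i _ => (hx i).rpow_const (.inr (hc i).le)
  rw [lintegral_congr_ae hae']
  refine (lintegral_liminf_le fun k => (hprodc k).measurable.ennreal_ofReal).trans ?_
  have hrhs : Filter.Tendsto (fun k => ENNReal.ofReal
      (∏ i, (∫ y, u i k y ∂(ProbabilityTheory.stdGaussian (F i))) ^ c i)) Filter.atTop
      (nhds (ENNReal.ofReal (∏ i, (∫ y, f i y ∂(ProbabilityTheory.stdGaussian (F i))) ^ c i))) :=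
    ENNReal.tendsto_ofReal (tendsto_finsetProd _ fun i _ =>
      (hlim i).rpow_const (.inr (hc i).le))
  calc _ ≤ Filter.liminf (fun k => ENNReal.ofReal
        (∏ i, (∫ y, u i k y ∂(ProbabilityTheory.stdGaussian (F i))) ^ c i)) Filter.atTop := by
        refine Filter.liminf_le_liminf (.of_forall fun k => ?_)
        rw [← ofReal_integral_eq_lintegral_ofReal (hprodint k) (.of_forall fun x =>
          Finset.prod_nonneg fun i _ => Real.rpow_nonneg (hu0 i k _).le _)]
        exact ENNReal.ofReal_le_ofReal (hreal k)
    _ = _ := hrhs.liminf_eq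
    _ = _ := by
        have h0 : ∀ i, 0 ≤ ∫ y, f i y ∂(ProbabilityTheory.stdGaussian (F i)) :=
          fun i => integral_nonneg (hf0 i)
        rw [ENNReal.ofReal_prod_of_nonneg fun i _ => Real.rpow_nonneg (h0 i) _]
        exact Finset.prod_congr rfl fun i _ => (ENNReal.ofReal_rpow_of_nonneg (h0 i) (hc i).le).symm

end Geometric

section Lift

variable {H F : Type*} [NormedAddCommGroup H] [InnerProductSpace ℝ H]
  [NormedAddCommGroup F] [InnerProductSpace ℝ F]

/-- The linear map `(x, z) ↦ C x + s R z_j` on a sum of copies of `H`. -/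
def liftMap {k : ℕ} (C R : H →L[ℝ] F) (j : Fin k) (s : ℝ) :
    PiLp 2 (fun _ : Option (Fin k) => H) →L[ℝ] F :=
  C ∘L PiLp.proj 2 (fun _ : Option (Fin k) => H) none +
    s • (R ∘L PiLp.proj 2 (fun _ : Option (Fin k) => H) (some j))

theorem liftMap_apply {k : ℕ} (C R : H →L[ℝ] F) (j : Fin k) (s : ℝ)
    (x : PiLp 2 (fun _ : Option (Fin k) => H)) :
    liftMap C R j s x = C (x none) + s • R (x (some j)) := rfl

theorem norm_sq_adjoint_liftMap [FiniteDimensional ℝ H] [FiniteDimensional ℝ F] {k : ℕ}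
    (C R : H →L[ℝ] F) (j : Fin k) {s : ℝ} (hs : s ^ 2 = 1)
    (y : F) : ‖(liftMap C R j s).adjoint y‖ ^ 2 = ‖C.adjoint y‖ ^ 2 + ‖R.adjoint y‖ ^ 2 := by
  have h : (liftMap C R j s).adjoint y = WithLp.toLp 2 (fun o : Option (Fin k) =>
      o.elim (C.adjoint y) fun l => if l = j then s • R.adjoint y else 0) := by
    refine ext_inner_right ℝ fun x => ?_
    rw [ContinuousLinearMap.adjoint_inner_left, liftMap_apply, PiLp.inner_apply,
      Fintype.sum_option, inner_add_right]
    simp only [Option.elim]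
    rw [Finset.sum_eq_single j]
    · simp [inner_smul_left, inner_smul_right, ContinuousLinearMap.adjoint_inner_left]
    · intro b _ hb; simp [hb]
    · simp
  rw [h, PiLp.norm_sq_eq_of_L2, Fintype.sum_option]
  simp only [Option.elim]
  rw [Finset.sum_eq_single j]
  · simp [norm_smul, mul_pow, hs]
  · intro b _ hb; simp [hb]
  · simp

/-- The sign attached to a Boolean. -/
def boolSign (b : Bool) : ℝ := if b then 1 else -1

theorem boolSign_sq (b : Bool) : boolSign b ^ 2 = 1 := by cases b <;> simp [boolSign]

theorem sum_norm_sq_liftMap_le {ι : Type*} [Fintype ι] {F : ι → Type*}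
    [∀ i, NormedAddCommGroup (F i)] [∀ i, InnerProductSpace ℝ (F i)] {k : ℕ} (hk : 0 < k)
    (C R : ∀ i, H →L[ℝ] F i)
    (hR : ∀ i x, ‖R i x‖ ≤ ‖x‖) (c : ι → ℝ) (hc : ∀ i, 0 ≤ c i) (hck : ∑ i, c i ≤ k)
    (hsum : ∀ x, ∑ i, c i * ‖C i x‖ ^ 2 ≤ ‖x‖ ^ 2) (x : PiLp 2 (fun _ : Option (Fin k) => H)) :
    ∑ q : ι × Fin k × Bool,
      c q.1 / (2 * k) * ‖liftMap (C q.1) (R q.1) q.2.1 (boolSign q.2.2) x‖ ^ 2 ≤ ‖x‖ ^ 2 := by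
  have hk' : (0 : ℝ) < k := by exact_mod_cast hk
  have h1 : ∀ i (j : Fin k), ∑ b : Bool,
      c i / (2 * k) * ‖liftMap (C i) (R i) j (boolSign b) x‖ ^ 2 =
      c i / k * ‖C i (x none)‖ ^ 2 + c i / k * ‖R i (x (some j))‖ ^ 2 := by
    intro i j
    simp only [liftMap_apply, Fintype.sum_bool, boolSign, if_true, Bool.false_eq_true, if_false,
      one_smul, neg_smul]
    rw [← sub_eq_add_neg, norm_add_sq_real, norm_sub_sq_real]
    field_simp
    ring
  rw [PiLp.norm_sq_eq_of_L2, Fintype.sum_option, Fintype.sum_prod_type]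
  simp only [Fintype.sum_prod_type, h1, Finset.sum_add_distrib, Finset.sum_const, Finset.card_univ,
    Fintype.card_fin, nsmul_eq_mul]
  refine add_le_add ?_ ?_
  · refine le_trans (Finset.sum_le_sum fun i _ => ?_) (hsum (x none))
    exact le_of_eq (by field_simp)
  · rw [Finset.sum_comm]
    refine Finset.sum_le_sum fun j _ => ?_
    calc ∑ i, c i / k * ‖R i (x (some j))‖ ^ 2 ≤ ∑ i, c i / k * ‖x (some j)‖ ^ 2 := by
          refine Finset.sum_le_sum fun i _ => ?_
          have := hc i
          gcongr
          exact hR i _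
      _ = (∑ i, c i) / k * ‖x (some j)‖ ^ 2 := by rw [Finset.sum_div, Finset.sum_mul]
      _ ≤ 1 * ‖x (some j)‖ ^ 2 := by
          gcongr
          exact (div_le_one hk').2 hck
      _ = _ := one_mul _

theorem rpow_le_prod_liftMap {k : ℕ} (hk : 0 < k) (C R : H →L[ℝ] F) {f : F → ℝ}
    (hf0 : ∀ y, 0 ≤ f y)
    (hmid : ∀ y z, f y ≤ f (y + R z) ^ (1 / 2 : ℝ) * f (y - R z) ^ (1 / 2 : ℝ)) {c : ℝ}
    (hc : 0 ≤ c) (x : PiLp 2 (fun _ : Option (Fin k) => H)) :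
    f (C (x none)) ^ c ≤
      ∏ q : Fin k × Bool, f (liftMap C R q.1 (boolSign q.2) x) ^ (c / (2 * k)) := by
  have hk' : (0 : ℝ) < k := by exact_mod_cast hk
  rw [Fintype.prod_prod_type]
  calc f (C (x none)) ^ c = ∏ _j : Fin k, f (C (x none)) ^ (c / k) := by
        rw [Finset.prod_const, Finset.card_univ, Fintype.card_fin, ← Real.rpow_mul_natCast (hf0 _)]
        congr 1
        field_simp
    _ ≤ _ := by
        refine Finset.prod_le_prod (fun j _ => Real.rpow_nonneg (hf0 _) _) fun j _ => ?_
        refine (Real.rpow_le_rpow (hf0 _) (hmid _ (x (some j))) (by positivity)).trans_eq ?_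
        simp only [Fintype.prod_bool, liftMap_apply, boolSign, if_true, Bool.false_eq_true,
          if_false, one_smul, neg_smul]
        rw [← sub_eq_add_neg, Real.mul_rpow (Real.rpow_nonneg (hf0 _) _)
          (Real.rpow_nonneg (hf0 _) _), ← Real.rpow_mul (hf0 _), ← Real.rpow_mul (hf0 _)]
        congr 2 <;> field_simp

end Lift

section

variable {ι : Type*} [Fintype ι]
  {H : Type*} [NormedAddCommGroup H] [InnerProductSpace ℝ H] [FiniteDimensional ℝ H]
  [MeasurableSpace H] [BorelSpace H]
  {F : ι → Type*} [∀ i, NormedAddCommGroup (F i)] [∀ i, InnerProductSpace ℝ (F i)]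
  [∀ i, FiniteDimensional ℝ (F i)] [∀ i, MeasurableSpace (F i)] [∀ i, BorelSpace (F i)]

/-- The Gaussian Brascamp–Lieb inequality for maps `C i` that become adjoints of isometries after
adding directions `R i` in which `f i` is midpoint log-convex. -/
theorem lintegral_prod_rpow_comp_le_of_midpoint (C R : ∀ i, H →L[ℝ] F i)
    (hCR : ∀ i y, ‖(C i).adjoint y‖ ^ 2 + ‖(R i).adjoint y‖ ^ 2 = ‖y‖ ^ 2)
    (c : ι → ℝ) (hc : ∀ i, 0 < c i) (hsum : ∀ x, ∑ i, c i * ‖C i x‖ ^ 2 ≤ ‖x‖ ^ 2)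
    (f : ∀ i, F i → ℝ) (hf0 : ∀ i x, 0 ≤ f i x)
    (hf : ∀ i, Integrable (f i) (ProbabilityTheory.stdGaussian (F i)))
    (hmid : ∀ i y z, f i y ≤ f i (y + R i z) ^ (1 / 2 : ℝ) * f i (y - R i z) ^ (1 / 2 : ℝ)) :
    ∫⁻ x, ENNReal.ofReal (∏ i, f i (C i x) ^ c i) ∂(ProbabilityTheory.stdGaussian H) ≤
      ∏ i, ENNReal.ofReal (∫ y, f i y ∂(ProbabilityTheory.stdGaussian (F i))) ^ c i := by
  obtain ⟨k₀, hk₀⟩ := exists_nat_ge (∑ i, c i)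
  obtain ⟨k, hk, hck⟩ : ∃ k : ℕ, 0 < k ∧ ∑ i, c i ≤ k :=
    ⟨k₀ + 1, k₀.succ_pos, hk₀.trans (by push_cast; linarith)⟩
  have hk' : (0 : ℝ) < k := by exact_mod_cast hk
  set E := PiLp 2 (fun _ : Option (Fin k) => H)
  have hR : ∀ i x, ‖R i x‖ ≤ ‖x‖ := fun i => norm_apply_le_of_norm_adjoint_le _ fun y =>
    le_of_sq_le_sq (by nlinarith [hCR i y]) (norm_nonneg _)
  let π : E →L[ℝ] H := PiLp.proj 2 (fun _ : Option (Fin k) => H) none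
  have hπ : (ProbabilityTheory.stdGaussian E).map π = ProbabilityTheory.stdGaussian H := by
    refine map_stdGaussian_of_norm_adjoint π fun y => ?_
    have h1 := norm_sq_adjoint_liftMap (.id ℝ H) (0 : H →L[ℝ] H) ⟨0, hk⟩ (boolSign_sq true) y
    have h2 : liftMap (.id ℝ H) (0 : H →L[ℝ] H) ⟨0, hk⟩ (boolSign true) = π := by
      refine ContinuousLinearMap.ext fun x => ?_
      simp [liftMap_apply, π]
    rw [h2] at h1
    refine (sq_eq_sq₀ (norm_nonneg _) (norm_nonneg _)).1 (h1.trans ?_)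
    have h3 : (ContinuousLinearMap.id ℝ H).adjoint y = y :=
      ext_inner_right ℝ fun x => by rw [ContinuousLinearMap.adjoint_inner_left]; rfl
    simp [h3]
  rw [← hπ]
  refine (lintegral_map_le _ _).trans ?_
  calc _ ≤ ∫⁻ x, ENNReal.ofReal (∏ q : ι × Fin k × Bool,
        f q.1 (liftMap (C q.1) (R q.1) q.2.1 (boolSign q.2.2) x) ^ (c q.1 / (2 * k)))
        ∂(ProbabilityTheory.stdGaussian E) := by
        refine lintegral_mono fun x => ENNReal.ofReal_le_ofReal ?_
        rw [Fintype.prod_prod_type]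
        exact Finset.prod_le_prod (fun i _ => Real.rpow_nonneg (hf0 i _) _) fun i _ =>
          rpow_le_prod_liftMap hk (C i) (R i) (hf0 i) (hmid i) (hc i).le x
    _ ≤ _ := lintegral_prod_rpow_comp_le (F := fun q : ι × Fin k × Bool => F q.1)
        (fun q => liftMap (C q.1) (R q.1) q.2.1 (boolSign q.2.2))
        (fun q y => by
          refine (sq_eq_sq₀ (norm_nonneg _) (norm_nonneg _)).1 ?_
          rw [norm_sq_adjoint_liftMap _ _ _ (boolSign_sq _), hCR])
        (fun q => c q.1 / (2 * k)) (fun q => div_pos (hc _) (by positivity))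
        (sum_norm_sq_liftMap_le hk C R hR c (fun i => (hc i).le) hck hsum)
        (fun q => f q.1) (fun q => hf0 q.1) (fun q => hf q.1)
    _ = _ := by
        rw [Fintype.prod_prod_type]
        refine Finset.prod_congr rfl fun i _ => ?_
        change ∏ _q : Fin k × Bool,
          ENNReal.ofReal (∫ y, f i y ∂(ProbabilityTheory.stdGaussian (F i))) ^ (c i / (2 * k)) = _
        rw [Finset.prod_const, Finset.card_univ, Fintype.card_prod, Fintype.card_fin,
          Fintype.card_bool, ← ENNReal.rpow_mul_natCast]
        congr 1
        push_cast
        field_simp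

end

theorem prod_gaussianPDFReal {k : ℕ} (x : Fin k → ℝ) :
    ∏ i, ProbabilityTheory.gaussianPDFReal 0 1 (x i) =
      (2 * Real.pi) ^ (-(k : ℝ) / 2) * Real.exp (-(∑ i, x i ^ 2) / 2) := by
  simp only [ProbabilityTheory.gaussianPDFReal, NNReal.coe_one, mul_one, sub_zero]
  rw [Finset.prod_mul_distrib, ← Real.exp_sum, ← Finset.sum_div, Finset.sum_neg_distrib,
    Finset.prod_const, Finset.card_univ, Fintype.card_fin, Real.sqrt_eq_rpow,
    ← Real.rpow_neg (by positivity), ← Real.rpow_mul_natCast (by positivity)]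
  ring_nf

theorem stdGaussian_eq_pi (k : ℕ) :
    stdGaussian k = Measure.pi fun _ : Fin k => ProbabilityTheory.gaussianReal 0 1 := by
  refine (Measure.pi_eq fun s hs => ?_).symm
  set φ := ProbabilityTheory.gaussianPDFReal 0 1 with hφ
  have hφ0 : ∀ t, 0 ≤ φ t := ProbabilityTheory.gaussianPDFReal_nonneg 0 1
  have hint : ∀ i, Integrable ((s i).indicator φ) := fun i =>
    (ProbabilityTheory.integrable_gaussianPDFReal 0 1).indicator (hs i)
  have hnn : ∀ i t, 0 ≤ (s i).indicator φ t := fun i t => Set.indicator_nonneg (fun t _ => hφ0 t) t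
  have h1 : ∀ i, ProbabilityTheory.gaussianReal 0 1 (s i) =
      ENNReal.ofReal (∫ t, (s i).indicator φ t) := fun i => by
    rw [ProbabilityTheory.gaussianReal_apply_eq_integral _ one_ne_zero, integral_indicator (hs i)]
  have h2 : ∀ x : Fin k → ℝ, (Set.univ.pi s).indicator (fun x => ENNReal.ofReal
      ((2 * Real.pi) ^ (-(k : ℝ) / 2) * Real.exp (-(∑ i, x i ^ 2) / 2))) x =
      ENNReal.ofReal (∏ i, (s i).indicator φ (x i)) := by
    intro x
    simp only [← prod_gaussianPDFReal]
    by_cases hx : x ∈ Set.univ.pi s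
    · rw [Set.indicator_of_mem hx]
      congr 1
      exact Finset.prod_congr rfl fun i _ => (Set.indicator_of_mem (hx i trivial) _).symm
    · rw [Set.indicator_of_notMem hx]
      simp only [Set.mem_pi, Set.mem_univ, true_imp_iff, not_forall] at hx
      obtain ⟨i, hi⟩ := hx
      rw [Finset.prod_eq_zero (Finset.mem_univ i) (Set.indicator_of_notMem hi _),
        ENNReal.ofReal_zero]
  have hm : MeasurableSet (Set.univ.pi s) := .univ_pi hs
  rw [stdGaussian, withDensity_apply _ hm, ← lintegral_indicator hm, lintegral_congr h2,
    ← ofReal_integral_eq_lintegral_ofReal (volume_pi (α := fun _ : Fin k => ℝ) ▸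
      Integrable.fintype_prod hint) (.of_forall fun x => Finset.prod_nonneg fun i _ => hnn i _),
    integral_fintype_prod_volume_eq_prod, ENNReal.ofReal_prod_of_nonneg fun i _ =>
      integral_nonneg (hnn i)]
  exact Finset.prod_congr rfl fun i _ => (h1 i).symm

theorem map_toLp_stdGaussian (k : ℕ) : (stdGaussian k).map (WithLp.toLp 2) =
    ProbabilityTheory.stdGaussian (EuclideanSpace ℝ (Fin k)) := by
  rw [stdGaussian_eq_pi]
  exact ProbabilityTheory.map_pi_eq_stdGaussian

theorem map_ofLp_stdGaussian (k : ℕ) :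
    (ProbabilityTheory.stdGaussian (EuclideanSpace ℝ (Fin k))).map WithLp.ofLp = stdGaussian k := by
  rw [← map_toLp_stdGaussian, Measure.map_map (by fun_prop) (by fun_prop)]
  exact Measure.map_id

theorem MoreLogConvex.le_midpoint {k : ℕ} {f : (Fin k → ℝ) → ℝ} {Q : Matrix (Fin k) (Fin k) ℝ}
    (hf : MoreLogConvex f Q) (hQ : Q.IsSymm) {v : Fin k → ℝ} (hv : Q.mulVec v = 0)
    (y : Fin k → ℝ) : f y ≤ f (y + v) ^ (1 / 2 : ℝ) * f (y - v) ^ (1 / 2 : ℝ) := by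
  obtain ⟨h, ⟨h0, hlc⟩, rfl⟩ := hf
  have hv' : ∀ w, Q.mulVec w ⬝ᵥ v = 0 := fun w => by
    rw [dotProduct_comm, dotProduct_mulVec, ← mulVec_transpose, hQ.eq, hv, zero_dotProduct]
  have hg : ∀ s : ℝ, gaussFn Q (y + s • v) = gaussFn Q y := fun s => by
    simp [gaussFn, mulVec_add, mulVec_smul, hv, hv', dotProduct_add]
  have hp : gaussFn Q (y + v) = gaussFn Q y := by simpa using hg 1
  have hm : gaussFn Q (y - v) = gaussFn Q y := by simpa [sub_eq_add_neg] using hg (-1)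
  have hg0 : 0 ≤ gaussFn Q y := (Real.exp_pos _).le
  have key := hlc (y + v) (y - v) (1 / 2) (1 / 2) (by norm_num) (by norm_num) (by norm_num)
  have hy : (1 / 2 : ℝ) • (y + v) + (1 / 2 : ℝ) • (y - v) = y := by module
  rw [hy] at key
  simp only [hp, hm]
  rw [Real.mul_rpow hg0 (h0 _), Real.mul_rpow hg0 (h0 _), mul_mul_mul_comm,
    ← Real.rpow_add_of_nonneg hg0 (by norm_num) (by norm_num)]
  norm_num1
  rw [Real.rpow_one]
  norm_num1 at key
  exact mul_le_mul_of_nonneg_left key hg0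

open scoped MatrixOrder in
/-- A positive semidefinite matrix annihilated by a symmetric matrix `S` factors as `R Rᵀ`, with
`R` having any prescribed sufficiently large number of columns and `S R = 0`. -/
theorem Matrix.PosSemidef.exists_eq_mul_transpose {k n : ℕ} (hkn : k ≤ n)
    {A S : Matrix (Fin k) (Fin k) ℝ} (hA : A.PosSemidef) (hS : S.IsSymm) (hAS : A * S = 0) :
    ∃ R : Matrix (Fin k) (Fin n) ℝ, R * Rᵀ = A ∧ S * R = 0 := by
  obtain ⟨B, hB⟩ := CStarAlgebra.nonneg_iff_eq_star_mul_self.1 hA.nonneg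
  rw [star_eq_conjTranspose, conjTranspose_eq_transpose_of_trivial] at hB
  let P : Matrix (Fin k) (Fin n) ℝ := (1 : Matrix (Fin n) (Fin n) ℝ).submatrix (Fin.castLE hkn) id
  have hP : P * Pᵀ = 1 := by
    ext i j
    simp [P, Matrix.mul_apply, Matrix.one_apply]
  have hR : (Bᵀ * P) * (Bᵀ * P)ᵀ = A := by
    rw [transpose_mul, transpose_transpose, Matrix.mul_assoc, ← Matrix.mul_assoc P, hP,
      Matrix.one_mul, hB]
  refine ⟨Bᵀ * P, hR, ?_⟩
  have hSA : S * A = 0 := by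
    have hAt : Aᵀ = A := by rw [hB, transpose_mul, transpose_transpose]
    have := congrArg Matrix.transpose hAS
    rwa [transpose_mul, hS.eq, hAt, transpose_zero] at this
  refine Matrix.self_mul_conjTranspose_eq_zero.1 ?_
  rw [conjTranspose_eq_transpose_of_trivial, transpose_mul S, Matrix.mul_assoc,
    ← Matrix.mul_assoc (Bᵀ * P), hR, ← Matrix.mul_assoc, hSA, Matrix.zero_mul]

section

variable {k n : ℕ}

/-- The continuous linear map between Euclidean spaces given by a matrix. -/
def Matrix.toEuclideanContinuousLinear (A : Matrix (Fin k) (Fin n) ℝ) :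
    EuclideanSpace ℝ (Fin n) →L[ℝ] EuclideanSpace ℝ (Fin k) :=
  A.toEuclideanLin.toContinuousLinearMap

theorem Matrix.toEuclideanContinuousLinear_apply (A : Matrix (Fin k) (Fin n) ℝ)
    (x : EuclideanSpace ℝ (Fin n)) :
    A.toEuclideanContinuousLinear x = WithLp.toLp 2 (A.mulVec x.ofLp) := rfl

theorem norm_sq_toLp_mulVec (A : Matrix (Fin k) (Fin n) ℝ) (x : Fin n → ℝ) :
    ‖(WithLp.toLp 2 (A.mulVec x) : EuclideanSpace ℝ (Fin k))‖ ^ 2 = x ⬝ᵥ (Aᵀ * A).mulVec x := by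
  rw [EuclideanSpace.real_norm_sq_eq, ← mulVec_mulVec, dotProduct_mulVec, vecMul_transpose]
  simp [dotProduct, sq]

theorem adjoint_toEuclideanContinuousLinear (A : Matrix (Fin k) (Fin n) ℝ) :
    A.toEuclideanContinuousLinear.adjoint = Aᵀ.toEuclideanContinuousLinear := by
  symm
  rw [ContinuousLinearMap.eq_adjoint_iff]
  intro x y
  simp only [toEuclideanContinuousLinear_apply, EuclideanSpace.inner_eq_star_dotProduct,
    star_trivial]
  rw [dotProduct_mulVec, vecMul_transpose, dotProduct_comm (A *ᵥ _)]

end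

/-- The Gaussian form of the generalized geometric Brascamp–Lieb inequality. -/
theorem gaussian_geometric_brascamp_lieb
    {n m : ℕ} (hnm : n ≤ m) {ni : Fin m → ℕ}
    (hni_pos : ∀ i, 0 < ni i) (hni_le : ∀ i, ni i ≤ n)
    (C : ∀ i, Matrix (Fin (ni i)) (Fin n) ℝ)
    (Q : ∀ i, Matrix (Fin (ni i)) (Fin (ni i)) ℝ)
    (hCC : ∀ i, ((1 : Matrix (Fin (ni i)) (Fin (ni i)) ℝ) - C i * (C i)ᵀ).PosSemidef)
    (hQ1 : ∀ i, (Q i - 1).PosSemidef)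
    (hcomp : ∀ i, ((1 : Matrix (Fin (ni i)) (Fin (ni i)) ℝ) - C i * (C i)ᵀ) * (Q i - 1) = 0)
    (p : Fin m → ℝ) (hp : ∀ i, 0 < p i)
    (hsum : ∑ i, p i • ((C i)ᵀ * C i) = 1)
    (f : ∀ i, (Fin (ni i) → ℝ) → ℝ)
    (hf0 : ∀ i x, 0 ≤ f i x)
    (hfint : ∀ i, Integrable (f i) (stdGaussian (ni i)))
    (hflc : ∀ i, MoreLogConvex (f i) ((2 * Real.pi)⁻¹ • (Q i - 1))) :
    (∫⁻ x, ENNReal.ofReal (∏ i, f i ((C i).mulVec x) ^ p i) ∂ stdGaussian n) ≤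
      ∏ i, ENNReal.ofReal (∫ y, f i y ∂ stdGaussian (ni i)) ^ p i := by
  have hS : ∀ i, (Q i - 1).IsSymm := fun i => by
    have := (hQ1 i).isHermitian.eq
    rwa [conjTranspose_eq_transpose_of_trivial] at this
  choose R hR hSR using fun i => (hCC i).exists_eq_mul_transpose (hni_le i) (hS i) (hcomp i)
  have hofLp : ∀ k : ℕ, Measurable (WithLp.ofLp : EuclideanSpace ℝ (Fin k) → Fin k → ℝ) :=
    fun k => by fun_prop
  have hfint' : ∀ i, Integrable (fun y : EuclideanSpace ℝ (Fin (ni i)) => f i y.ofLp)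
      (ProbabilityTheory.stdGaussian _) := fun i => by
    have := hfint i
    rw [← map_ofLp_stdGaussian] at this
    exact this.comp_measurable (hofLp _)
  have hI : ∀ i, ∫ y, f i y ∂ stdGaussian (ni i) = ∫ y : EuclideanSpace ℝ (Fin (ni i)),
      f i y.ofLp ∂(ProbabilityTheory.stdGaussian _) := fun i => by
    have := hfint i
    rw [← map_ofLp_stdGaussian] at this ⊢
    rw [integral_map (hofLp _).aemeasurable this.aestronglyMeasurable]
  simp only [hI]
  rw [← map_ofLp_stdGaussian]
  refine (lintegral_map_le _ _).trans ?_
  refine lintegral_prod_rpow_comp_le_of_midpoint (fun i => (C i).toEuclideanContinuousLinear)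
    (fun i => (R i).toEuclideanContinuousLinear) (fun i y => ?_) p hp (fun x => ?_)
    (fun i y => f i y.ofLp) (fun i y => hf0 i _) hfint' (fun i y z => ?_)
  · simp only [adjoint_toEuclideanContinuousLinear, toEuclideanContinuousLinear_apply,
      norm_sq_toLp_mulVec, transpose_transpose]
    rw [← dotProduct_add, ← add_mulVec, hR, add_sub_cancel, one_mulVec,
      EuclideanSpace.real_norm_sq_eq]
    simp [dotProduct, sq]
  · simp only [toEuclideanContinuousLinear_apply, norm_sq_toLp_mulVec]
    have h := congrArg (fun M => x.ofLp ⬝ᵥ M.mulVec x.ofLp) hsum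
    simp only [sum_mulVec, dotProduct_sum, smul_mulVec, dotProduct_smul, smul_eq_mul,
      one_mulVec] at h
    rw [h, EuclideanSpace.real_norm_sq_eq]
    simp [dotProduct, sq]
  · refine (hflc i).le_midpoint ((hS i).smul _) (v := (R i).mulVec z.ofLp) ?_ y.ofLp
    rw [smul_mulVec, mulVec_mulVec, hSR, zero_mulVec, smul_zero]
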